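/- arXiv:1801.00573 — 4 statements merged into one kernel-verified Lean document; each statement's English description precedes it below -/
import Mathlib

section
/- (Lemma 2.1, spectral radius bound) Let E be a real Banach space, T(t) (t ≥ 0) a C₀-semigroup on E with ‖T(t)‖ ≤ M e^{−ν t} for all t ≥ 0 (M ≥ 1, ν > 0), ω > 0, and let P be the bounded linear operator on C_ω(ℝ, E) defined by (Ph)(t) = (I − T(ω))⁻¹ ∫_{t−ω}^t T(t − s) h(s) ds. Then for every n ≥ 1 and every h ∈ C_ω(ℝ, E), ‖Pⁿ h‖_C ≤ M ν^{−n} ‖h‖_C; consequently limsup_{n→∞} ‖Pⁿ‖^{1/n} ≤ 1/ν, i.e. the spectral radius of P is at most 1/ν. -/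
open BoundedContinuousFunction

/-- The subspace `C_ω(ℝ, E)` of ω-periodic bounded continuous functions,
as a submodule of the Banach space of bounded continuous functions
(for continuous ω-periodic functions the sup norm over `ℝ` coincides with
`‖u‖_C = max_{t ∈ [0,ω]} ‖u t‖`). -/
noncomputable def periodicBCF (E : Type*) [NormedAddCommGroup E] [NormedSpace ℝ E]
    (ω : ℝ) : Submodule ℝ (BoundedContinuousFunction ℝ E) where
  carrier := {f | Function.Periodic f ω}
  add_mem' := by
    intro f g hf hg t
    simp only [BoundedContinuousFunction.coe_add, Pi.add_apply, hf t, hg t]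
  zero_mem' := by intro t; simp
  smul_mem' := by
    intro c f hf t
    simp only [BoundedContinuousFunction.coe_smul, Pi.smul_apply, hf t]

/-- One-step estimate: the renormed bound `e^{ντ}‖T(τ) ·‖ ≤ K` improves by `ν⁻¹` under `P`. -/
theorem step_aux
    {E : Type*} [NormedAddCommGroup E] [NormedSpace ℝ E] [CompleteSpace E]
    (T : ℝ → E →L[ℝ] E) (M ν : ℝ) (hν : 0 < ν)
    (hTsemi : ∀ t s : ℝ, 0 ≤ t → 0 ≤ s → T (t + s) = (T t).comp (T s))
    (hTnorm : ∀ t : ℝ, 0 ≤ t → ‖T t‖ ≤ M * Real.exp (-ν * t))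
    (ω : ℝ) (hω : 0 < ω) (h : ℝ → E) (K : ℝ)
    (hK : ∀ s τ : ℝ, 0 ≤ τ → ‖T τ (h s)‖ ≤ K * Real.exp (-ν * τ)) (t : ℝ) (u : E)
    (hu : u - T ω u = ∫ s in (t - ω)..t, T (t - s) (h s)) (τ : ℝ) (hτ : 0 ≤ τ) :
    ‖T τ u‖ ≤ K * ν⁻¹ * Real.exp (-ν * τ) := by
  have hK0 : 0 ≤ K := by
    have := (norm_nonneg _).trans (hK 0 0 le_rfl)
    simpa using this
  set q := Real.exp (-ν * ω) with hq
  have hq1 : q < 1 := by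
    rw [hq, Real.exp_lt_one_iff]; nlinarith
  have hq0 : 0 < q := Real.exp_pos _
  -- bound for the integral
  have hI : ∀ σ : ℝ, 0 ≤ σ → ‖T σ (u - T ω u)‖ ≤ K * ν⁻¹ * (1 - q) * Real.exp (-ν * σ) := by
    intro σ hσ
    rw [hu]
    by_cases hint : IntervalIntegrable (fun s => T (t - s) (h s)) MeasureTheory.volume (t - ω) t
    · rw [← ContinuousLinearMap.intervalIntegral_comp_comm _ hint]
      have hd : ∀ s ∈ Set.uIcc (t - ω) t,
          HasDerivAt (fun s => K * ν⁻¹ * Real.exp (-ν * (σ + (t - s))))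
            (K * Real.exp (-ν * (σ + (t - s)))) s := by
        intro s _
        have h1 : HasDerivAt (fun s => -ν * (σ + (t - s))) ν s := by
          have := (((hasDerivAt_id s).const_sub t).const_add σ).const_mul (-ν)
          simpa using this
        have h2 := (h1.exp).const_mul (K * ν⁻¹)
        have e : K * Real.exp (-ν * (σ + (t - s)))
            = K * ν⁻¹ * (Real.exp (-ν * (σ + (t - s))) * ν) := by
          field_simp
        rw [e]
        exact h2
      have hii : IntervalIntegrable (fun s => K * Real.exp (-ν * (σ + (t - s))))
          MeasureTheory.volume (t - ω) t := by
        apply Continuous.intervalIntegrable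
        fun_prop
      have hval := intervalIntegral.integral_eq_sub_of_hasDerivAt hd hii
      have hle := intervalIntegral.norm_integral_le_of_norm_le (a := t - ω) (b := t)
        (f := fun s => T σ (T (t - s) (h s))) (by linarith)
        (Filter.Eventually.of_forall (fun s hs => by
          have h0 : 0 ≤ t - s := by linarith [hs.2]
          have := hK s (σ + (t - s)) (by linarith)
          rw [hTsemi σ (t - s) hσ h0] at this
          simpa using this)) hii
      refine hle.trans (le_of_eq ?_)
      rw [hval]
      have e1 : -ν * (σ + (t - (t - ω))) = -ν * ω + -ν * σ := by ring
      have e2 : -ν * (σ + (t - t)) = -ν * σ := by ring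
      rw [e1, e2, Real.exp_add, ← hq]
      ring
    · rw [intervalIntegral.integral_undef hint, map_zero, norm_zero]
      have : 0 ≤ 1 - q := by linarith
      positivity
  -- the renormed values
  let g : Set.Ici (0 : ℝ) → ℝ := fun σ => Real.exp (ν * σ) * ‖T σ u‖
  have hee : ∀ σ : ℝ, Real.exp (ν * σ) * Real.exp (-ν * σ) = 1 := by
    intro σ; rw [← Real.exp_add]; simp
  have hbdd : BddAbove (Set.range g) := by
    refine ⟨M * ‖u‖, ?_⟩
    rintro _ ⟨σ, rfl⟩
    have h1 : ‖T σ u‖ ≤ M * Real.exp (-ν * σ) * ‖u‖ := (T σ).le_of_opNorm_le (hTnorm σ σ.2) u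
    calc Real.exp (ν * σ) * ‖T σ u‖ ≤ Real.exp (ν * σ) * (M * Real.exp (-ν * σ) * ‖u‖) := by gcongr
      _ = (Real.exp (ν * σ) * Real.exp (-ν * σ)) * (M * ‖u‖) := by ring
      _ = M * ‖u‖ := by rw [hee, one_mul]
  have hG : (⨆ σ, g σ) ≤ K * ν⁻¹ * (1 - q) + q * ⨆ σ, g σ := by
    have : Nonempty (Set.Ici (0 : ℝ)) := ⟨⟨0, Set.self_mem_Ici⟩⟩
    refine ciSup_le ?_
    rintro ⟨σ, hσ⟩
    have hσ : 0 ≤ σ := hσ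
    have h1 := hI σ hσ
    have h2 : g ⟨σ + ω, Set.mem_Ici.2 (by linarith)⟩ ≤ ⨆ σ, g σ := le_ciSup hbdd _
    have h3 : T σ u = T σ (u - T ω u) + T (σ + ω) u := by
      rw [hTsemi σ ω hσ hω.le]; simp
    have h4 : q * Real.exp (ν * (σ + ω)) = Real.exp (ν * σ) := by
      rw [hq, ← Real.exp_add]; ring_nf
    calc Real.exp (ν * σ) * ‖T σ u‖
        ≤ Real.exp (ν * σ) * (K * ν⁻¹ * (1 - q) * Real.exp (-ν * σ) + ‖T (σ + ω) u‖) := by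
          rw [h3]
          gcongr
          exact (norm_add_le _ _).trans (by gcongr)
      _ = (Real.exp (ν * σ) * Real.exp (-ν * σ)) * (K * ν⁻¹ * (1 - q))
            + q * (Real.exp (ν * (σ + ω)) * ‖T (σ + ω) u‖) := by
          rw [← mul_assoc q, h4]; ring
      _ ≤ _ := by
          rw [hee, one_mul]
          gcongr
  have hG2 : (⨆ σ, g σ) ≤ K * ν⁻¹ := by
    by_contra! hc
    nlinarith
  have h5 : Real.exp (ν * τ) * ‖T τ u‖ ≤ K * ν⁻¹ :=
    (le_ciSup hbdd (⟨τ, hτ⟩ : Set.Ici (0 : ℝ))).trans hG2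
  calc ‖T τ u‖ = (Real.exp (ν * τ) * Real.exp (-ν * τ)) * ‖T τ u‖ := by rw [hee, one_mul]
    _ = (Real.exp (ν * τ) * ‖T τ u‖) * Real.exp (-ν * τ) := by ring
    _ ≤ _ := by gcongr

/-- **Lemma 2.1, spectral radius bound.** The periodic solution
operator `P` on `C_ω(ℝ, E)` satisfies `‖Pⁿ h‖_C ≤ M ν⁻ⁿ ‖h‖_C` for all `n ≥ 1`,
and consequently `limsup_{n → ∞} ‖Pⁿ‖^{1/n} ≤ 1/ν`, i.e. the spectral radius
of `P` is at most `1/ν`. -/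
theorem stmt4
    {E : Type*} [NormedAddCommGroup E] [NormedSpace ℝ E] [CompleteSpace E]
    (T : ℝ → E →L[ℝ] E) (M ν : ℝ) (hM : 1 ≤ M) (hν : 0 < ν)
    (hT0 : T 0 = ContinuousLinearMap.id ℝ E)
    (hTsemi : ∀ t s : ℝ, 0 ≤ t → 0 ≤ s → T (t + s) = (T t).comp (T s))
    (hTcont : ∀ x : E, ContinuousOn (fun t : ℝ => T t x) (Set.Ici (0 : ℝ)))
    (hTnorm : ∀ t : ℝ, 0 ≤ t → ‖T t‖ ≤ M * Real.exp (-ν * t))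
    (ω : ℝ) (hω : 0 < ω)
    -- `S = (I - T ω)⁻¹`:
    (S : E →L[ℝ] E)
    (hS₁ : (ContinuousLinearMap.id ℝ E - T ω).comp S = ContinuousLinearMap.id ℝ E)
    (hS₂ : S.comp (ContinuousLinearMap.id ℝ E - T ω) = ContinuousLinearMap.id ℝ E)
    -- `P` is the periodic solution operator on `C_ω(ℝ, E)`:
    (P : periodicBCF E ω →L[ℝ] periodicBCF E ω)
    (hP : ∀ h : periodicBCF E ω, ∀ t : ℝ,
      ((P h : BoundedContinuousFunction ℝ E) t)
        = S (∫ s in (t - ω)..t, T (t - s) ((h : BoundedContinuousFunction ℝ E) s))) :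
    (∀ n : ℕ, 1 ≤ n → ∀ h : periodicBCF E ω, ‖(P ^ n) h‖ ≤ M * ν⁻¹ ^ n * ‖h‖) ∧
    Filter.limsup (fun n : ℕ => ‖P ^ n‖ ^ ((n : ℝ)⁻¹)) Filter.atTop ≤ 1 / ν := by
  have key : ∀ n : ℕ, ∀ h : periodicBCF E ω, ∀ s τ : ℝ, 0 ≤ τ →
      ‖T τ ((((P ^ n) h : periodicBCF E ω) : BoundedContinuousFunction ℝ E) s)‖
        ≤ M * ν⁻¹ ^ n * ‖h‖ * Real.exp (-ν * τ) := by
    intro n h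
    induction n with
    | zero =>
      intro s τ hτ
      have h1 := (T τ).le_of_opNorm_le (hTnorm τ hτ) ((h : BoundedContinuousFunction ℝ E) s)
      have h2 : ‖(h : BoundedContinuousFunction ℝ E) s‖ ≤ ‖h‖ :=
        BoundedContinuousFunction.norm_coe_le_norm _ s
      simp only [pow_zero, mul_one, one_apply_eq_self]
      calc _ ≤ _ := h1
        _ ≤ M * Real.exp (-ν * τ) * ‖h‖ := by gcongr
        _ = _ := by ring
    | succ n ih =>
      intro s τ hτ
      have := step_aux T M ν hν hTsemi hTnorm ω hω _ _ ih s
        (((P ((P ^ n) h) : periodicBCF E ω) : BoundedContinuousFunction ℝ E) s)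
        (by
          rw [hP]
          have := fun x => congrArg (fun A : E →L[ℝ] E => A x) hS₁
          simpa using this _) τ hτ
      rw [pow_succ', mul_apply_eq_comp]
      refine this.trans (le_of_eq ?_)
      ring
  have hmain : ∀ n : ℕ, ∀ h : periodicBCF E ω, ‖(P ^ n) h‖ ≤ M * ν⁻¹ ^ n * ‖h‖ := by
    intro n h
    have h0 : 0 ≤ M * ν⁻¹ ^ n * ‖h‖ := by positivity
    refine (BoundedContinuousFunction.norm_le h0).2 ?_
    intro s
    have := key n h s 0 le_rfl
    simpa [hT0] using this
  refine ⟨fun n _ => hmain n, ?_⟩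
  have hlim : Filter.Tendsto (fun n : ℕ => M ^ ((n : ℝ)⁻¹) * ν⁻¹) Filter.atTop (nhds (1 / ν)) := by
    have h1 : Filter.Tendsto (fun n : ℕ => M ^ ((n : ℝ)⁻¹)) Filter.atTop (nhds (M ^ (0 : ℝ))) :=
      Filter.Tendsto.comp (Real.continuousAt_const_rpow (by positivity))
        (tendsto_inv_atTop_nhds_zero_nat (𝕜 := ℝ))
    simpa using h1.mul_const ν⁻¹
  rw [← hlim.limsup_eq]
  refine Filter.limsup_le_limsup ?_ ?_ hlim.isBoundedUnder_le
  · filter_upwards [Filter.eventually_ge_atTop 1] with n hn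
    have hb : ‖P ^ n‖ ≤ M * ν⁻¹ ^ n :=
      ContinuousLinearMap.opNorm_le_bound _ (by positivity) (hmain n)
    calc ‖P ^ n‖ ^ ((n : ℝ)⁻¹) ≤ (M * ν⁻¹ ^ n) ^ ((n : ℝ)⁻¹) := by gcongr
      _ = M ^ ((n : ℝ)⁻¹) * ν⁻¹ := by
        rw [Real.mul_rpow (by positivity) (by positivity),
          Real.pow_rpow_inv_natCast (by positivity) (by omega)]
  · refine Filter.IsCoboundedUnder.of_frequently_ge (a := 0) ?_
    exact Filter.Frequently.of_forall (fun n => by positivity)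
end

section
/- (Theorem 1.1) Let E be a real ordered Banach space whose positive cone K is closed and normal, and let T(t) (t ≥ 0) be a positive compact C₀-semigroup on E satisfying ‖T(t)‖ ≤ M e^{−ν t} for all t ≥ 0 with constants M ≥ 1 and ν > 0. Let ω > 0, τ > 0, and let F : ℝ × K × K → K be continuous with F(t + ω, x, y) = F(t, x, y) for all t, x, y. Assume (H1): there exist constants C₁, C₂ > 0 with C₁ + C₂ < ν and a continuous ω-periodic function h₀ : ℝ → K such that F(t, x, y) ≤ C₁ x + C₂ y + h₀(t) for all t ∈ ℝ and x, y ∈ K. Then the delay evolution equation u'(t) + A u(t) = F(t, u(t), u(t − τ)) (t ∈ ℝ) has at least one positive ω-periodic mild solution. -/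
section DelayEvolution
open Set Metric MeasureTheory Filter Topology


theorem bw_det_poly {V : Type*} [NormedAddCommGroup V] [NormedSpace ℝ V] [FiniteDimensional ℝ V]
    (δ : ℝ) (hδ : 0 < δ) : ∃ (m : ℕ) (c t : ℕ → ℝ), (∀ i, 0 ≤ t i ∧ t i < δ) ∧
      (∑ i ∈ Finset.range m, c i = 1) ∧
      ∀ A : V →L[ℝ] V, (ContinuousLinearMap.id ℝ V + A).det =
        ∑ i ∈ Finset.range m, c i * (ContinuousLinearMap.id ℝ V + (t i) • A).det := by
  classical
  let b := Module.finBasis ℝ V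
  set n := Module.finrank ℝ V
  let t : ℕ → ℝ := fun i => δ / (i + 2)
  have htinj : Function.Injective t := by
    intro i j h
    have h1 : (0:ℝ) < (i:ℝ) + 2 := by positivity
    have h2 : (0:ℝ) < (j:ℝ) + 2 := by positivity
    simp only [t] at h
    rw [div_eq_div_iff h1.ne' h2.ne'] at h
    have := mul_left_cancel₀ hδ.ne' h
    exact_mod_cast (by linarith : (i:ℝ) = j)
  let s := Finset.range (n + 1)
  refine ⟨n + 1, fun i => (Lagrange.basis s t i).eval 1, t, ?_, ?_, ?_⟩
  · intro i
    refine ⟨by positivity, ?_⟩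
    simp only [t]
    rw [div_lt_iff₀ (by positivity)]
    nlinarith [(Nat.cast_nonneg i : (0:ℝ) ≤ i)]
  · rw [← Polynomial.eval_finsetSum, Lagrange.sum_basis htinj.injOn (by simp)]
    simp
  · intro A
    let Mx := LinearMap.toMatrix b b (A : V →ₗ[ℝ] V)
    let P : Polynomial ℝ := Matrix.det ((Polynomial.X : Polynomial ℝ) • Mx.map Polynomial.C
      + (1 : Matrix (Fin n) (Fin n) ℝ).map Polynomial.C)
    have hP : ∀ x : ℝ, (ContinuousLinearMap.id ℝ V + x • A).det = P.eval x := by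
      intro x
      have h1 : P.eval x = Matrix.det (x • Mx + 1) := by
        change (Polynomial.evalRingHom x) P = _
        simp only [P]
        rw [RingHom.map_det]
        congr 1
        ext i j
        by_cases hij : i = j <;> simp [hij] <;> exact mul_comm _ _
      have h2 : LinearMap.toMatrix b b ((ContinuousLinearMap.id ℝ V + x • A : V →L[ℝ] V) : V →ₗ[ℝ] V)
          = x • Mx + 1 := by
        have : ((ContinuousLinearMap.id ℝ V + x • A : V →L[ℝ] V) : V →ₗ[ℝ] V)
          = x • (A : V →ₗ[ℝ] V) + LinearMap.id := by
          ext v; simp [add_comm]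
        rw [this, map_add, map_smul, LinearMap.toMatrix_id]
      rw [h1, ← h2, LinearMap.det_toMatrix]
    have hdeg : P.degree < s.card := by
      have := Polynomial.natDegree_det_X_add_C_le Mx (1 : Matrix (Fin n) (Fin n) ℝ)
      refine lt_of_le_of_lt (Polynomial.degree_le_natDegree) ?_
      simp only [s, Finset.card_range]
      simp only [Fintype.card_fin] at this
      exact_mod_cast Nat.lt_succ_of_le this
    have h := congrArg (Polynomial.eval 1) (Lagrange.eq_interpolate (s := s) (v := t) htinj.injOn hdeg)
    rw [Lagrange.interpolate_apply, Polynomial.eval_finsetSum, ← hP 1, one_smul] at h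
    rw [h]
    refine Finset.sum_congr rfl fun i _ => ?_
    rw [Polynomial.eval_mul, Polynomial.eval_C, hP, mul_comm]

theorem bw_det_pos {V : Type*} [NormedAddCommGroup V] [NormedSpace ℝ V] [FiniteDimensional ℝ V]
    (A : V →L[ℝ] V) (hA : ‖A‖ < 1) : 0 < (ContinuousLinearMap.id ℝ V + A).det := by
  have hne : ∀ s ∈ Icc (0:ℝ) 1, (ContinuousLinearMap.id ℝ V + s • A).det ≠ 0 := by
    intro s hs h0
    have := LinearMap.bot_lt_ker_of_det_eq_zero (f := ((ContinuousLinearMap.id ℝ V + s • A : V →L[ℝ] V) : V →ₗ[ℝ] V)) h0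
    obtain ⟨v, hv, hv0⟩ := Submodule.exists_mem_ne_zero_of_ne_bot this.ne'
    have h1 : v + s • A v = 0 := by simpa using hv
    have h2 : ‖v‖ = ‖s • A v‖ := by
      rw [← norm_neg (s • A v), ← eq_neg_of_add_eq_zero_left h1]
    have h3 : ‖s • A v‖ ≤ ‖A‖ * ‖v‖ := by
      rw [norm_smul, Real.norm_of_nonneg hs.1]
      have := A.le_opNorm v
      nlinarith [norm_nonneg (A v), hs.1, hs.2]
    have h4 : 0 < ‖v‖ := norm_pos_iff.2 hv0
    nlinarith
  have hc : Continuous fun s : ℝ => (ContinuousLinearMap.id ℝ V + s • A).det := by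
    exact ContinuousLinearMap.continuous_det.comp (by fun_prop)
  by_contra hneg
  push Not at hneg
  have := intermediate_value_Icc' (zero_le_one' ℝ) hc.continuousOn
  obtain ⟨s, hs, h0⟩ := this (show (0:ℝ) ∈ Icc _ _ by
    constructor
    · simpa using hneg
    · simp [ContinuousLinearMap.det])
  exact hne s hs h0

theorem bw_no_retraction {V : Type*} [NormedAddCommGroup V] [InnerProductSpace ℝ V]
    [FiniteDimensional ℝ V] (U : Set V) (hU : IsOpen U) (hBU : closedBall (0:V) 1 ⊆ U)
    (r : V → V) (hr : ContDiffOn ℝ 1 r U) (hr1 : ∀ x ∈ closedBall (0:V) 1, ‖r x‖ = 1)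
    (hrs : ∀ x, ‖x‖ = 1 → r x = x) : False := by
  classical
  borelize V
  have hdiff : ∀ x ∈ closedBall (0:V) 1, HasFDerivAt r (fderiv ℝ r x) x := fun x hx =>
    ((hr.differentiableOn (by norm_num)).differentiableAt (hU.mem_nhds (hBU hx))).hasFDerivAt
  have hcont : ContinuousOn (fderiv ℝ r) (closedBall (0:V) 1) :=
    (hr.continuousOn_fderiv_of_isOpen hU (by norm_num)).mono hBU
  let D : V → V →L[ℝ] V := fun x => fderiv ℝ r x - ContinuousLinearMap.id ℝ V
  have hDc : ContinuousOn D (closedBall (0:V) 1) := hcont.sub continuousOn_const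
  obtain ⟨C0, hC0⟩ := (isCompact_closedBall (0:V) 1).exists_bound_of_continuousOn hDc
  let C : ℝ := |C0| + 1
  have hCpos : 0 < C := by positivity
  have hDC : ∀ x ∈ closedBall (0:V) 1, ‖D x‖ ≤ C := fun x hx =>
    (hC0 x hx).trans ((le_abs_self _).trans (by simp [C]))
  let G : V → V := fun x => if ‖x‖ < 1 then r x - x else 0
  have hGin : ∀ x, ‖x‖ ≤ 1 → G x = r x - x := by
    intro x hx
    rcases hx.lt_or_eq with h | h
    · simp [G, h]
    · simp [G, h, hrs x h]
  have hGout : ∀ x, 1 ≤ ‖x‖ → G x = 0 := by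
    intro x hx
    simp [G, not_lt.2 hx]
  have hLip1 : ∀ x y, ‖x‖ ≤ 1 → ‖y‖ ≤ 1 → ‖G x - G y‖ ≤ C * ‖x - y‖ := by
    intro x y hx hy
    rw [hGin x hx, hGin y hy]
    have := (convex_closedBall (0:V) 1).norm_image_sub_le_of_norm_hasFDerivWithin_le
      (f := fun x => r x - x) (f' := D) (C := C)
      (fun z hz => ((hdiff z hz).sub (hasFDerivAt_id z)).hasFDerivWithinAt) hDC
      (show y ∈ closedBall (0:V) 1 by simpa using hy) (show x ∈ closedBall (0:V) 1 by simpa using hx)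
    exact this
  have hLip2 : ∀ x y, ‖x‖ ≤ 1 → 1 ≤ ‖y‖ → ‖G x - G y‖ ≤ C * ‖x - y‖ := by
    intro x y hx hy
    have hcn : Continuous fun s : ℝ => ‖x + s • (y - x)‖ := by fun_prop
    obtain ⟨s, hs, h1⟩ := intermediate_value_Icc (zero_le_one' ℝ) hcn.continuousOn
      (show (1:ℝ) ∈ Icc _ _ by constructor <;> simpa)
    simp only at h1
    rw [hGout y hy, ← hGout (x + s • (y - x)) h1.ge]
    refine (hLip1 _ _ hx h1.le).trans ?_
    have : x - (x + s • (y - x)) = s • (x - y) := by module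
    rw [this, norm_smul, Real.norm_of_nonneg hs.1]
    have := hs.2
    have h3 : s * ‖x - y‖ ≤ ‖x - y‖ := mul_le_of_le_one_left (norm_nonneg _) hs.2
    exact mul_le_mul_of_nonneg_left h3 hCpos.le
  have hLip : ∀ x y, ‖G x - G y‖ ≤ C * ‖x - y‖ := by
    intro x y
    rcases le_total ‖x‖ 1 with hx | hx <;> rcases le_total ‖y‖ 1 with hy | hy
    · exact hLip1 x y hx hy
    · exact hLip2 x y hx hy
    · rw [norm_sub_rev, norm_sub_rev x]; exact hLip2 y x hy hx
    · rw [hGout x hx, hGout y hy]; simp; positivity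
  -- the volume identity
  have hvol : ∀ t : ℝ, 0 ≤ t → t < 1 / C →
      ∫ x in ball (0:V) 1, (ContinuousLinearMap.id ℝ V + t • D x).det = volume.real (ball (0:V) 1) := by
    intro t ht0 htC
    have htC' : t * C < 1 := by rwa [lt_div_iff₀ hCpos] at htC
    let φ : V → V := fun x => x + t • G x
    have hinj : Function.Injective φ := by
      intro x y hxy
      have h1 : x - y = t • (G y - G x) := by
        have : x + t • G x = y + t • G y := hxy
        rw [smul_sub, sub_eq_sub_iff_add_eq_add, this, add_comm]
      have h2 : ‖x - y‖ ≤ t * C * ‖x - y‖ := by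
        calc ‖x - y‖ = t * ‖G y - G x‖ := by rw [h1, norm_smul, Real.norm_of_nonneg ht0]
          _ ≤ t * (C * ‖y - x‖) := by gcongr; exact hLip y x
          _ = _ := by rw [norm_sub_rev, mul_assoc]
      have h3 : ‖x - y‖ = 0 := by nlinarith [norm_nonneg (x - y)]
      exact sub_eq_zero.1 (norm_eq_zero.1 h3)
    have hsurj : Function.Surjective φ := by
      intro y
      have hcw : ContractingWith (t * C).toNNReal (fun x => y - t • G x) := by
        refine ⟨by simpa using htC', LipschitzWith.of_dist_le_mul fun a b => ?_⟩
        rw [dist_eq_norm, dist_eq_norm, Real.coe_toNNReal _ (by positivity)]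
        have : y - t • G a - (y - t • G b) = t • (G b - G a) := by module
        rw [this, norm_smul, Real.norm_of_nonneg ht0, mul_assoc, norm_sub_rev]
        gcongr
        exact hLip a b
      obtain ⟨z, hz⟩ : ∃ z, y - t • G z = z := ⟨_, hcw.fixedPoint_isFixedPt⟩
      refine ⟨z, ?_⟩
      simp only [φ]
      rw [← eq_sub_iff_add_eq]; exact hz.symm
    have hout : ∀ x, x ∉ ball (0:V) 1 → φ x = x := by
      intro x hx
      simp only [mem_ball, dist_zero_right, not_lt] at hx
      simp [φ, hGout x hx]
    have himg : φ '' ball (0:V) 1 = ball (0:V) 1 := by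
      ext y
      constructor
      · rintro ⟨x, hx, rfl⟩
        by_contra hy
        have := hinj (hout _ hy)
        rw [this] at hy; exact hy hx
      · intro hy
        obtain ⟨x, rfl⟩ := hsurj y
        refine ⟨x, ?_, rfl⟩
        by_contra hx
        rw [hout x hx] at hy
        exact hx hy
    have hderiv : ∀ x ∈ ball (0:V) 1,
        HasFDerivWithinAt φ (ContinuousLinearMap.id ℝ V + t • D x) (ball (0:V) 1) x := by
      intro x hx
      have h1 : HasFDerivWithinAt (fun x => x + t • (r x - x)) (ContinuousLinearMap.id ℝ V + t • D x) (ball (0:V) 1) x :=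
        ((hasFDerivAt_id x).add (((hdiff x (ball_subset_closedBall hx)).sub (hasFDerivAt_id x)).const_smul t)).hasFDerivWithinAt
      refine h1.congr (fun z hz => ?_) ?_
      · simp only [φ]; rw [hGin z (by simpa using (ball_subset_closedBall hz))]
      · simp only [φ]; rw [hGin x (by simpa using (ball_subset_closedBall hx))]
    have h := integral_image_eq_integral_abs_det_fderiv_smul volume measurableSet_ball hderiv
      hinj.injOn (fun _ => (1:ℝ))
    rw [himg] at h
    simp only [integral_const, smul_eq_mul, mul_one, MeasurableSet.univ, measureReal_restrict_apply, univ_inter] at h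
    rw [h]
    refine setIntegral_congr_fun measurableSet_ball fun x hx => ?_
    rw [abs_of_pos]
    refine bw_det_pos _ ?_
    rw [norm_smul, Real.norm_of_nonneg ht0]
    refine lt_of_le_of_lt ?_ htC'
    gcongr
    exact hDC x (ball_subset_closedBall hx)
  obtain ⟨m, c, t, ht, hc, hdet⟩ := bw_det_poly (V := V) (1 / C) (by positivity)
  have hInt1 : ∀ s : ℝ, IntegrableOn (fun x => (ContinuousLinearMap.id ℝ V + s • D x).det) (ball (0:V) 1) := by
    intro s
    refine IntegrableOn.mono_set (ContinuousOn.integrableOn_compact (isCompact_closedBall (0:V) 1) ?_) ball_subset_closedBall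
    exact ContinuousLinearMap.continuous_det.comp_continuousOn (continuousOn_const.add (hDc.const_smul s))
  have hfin : ∫ x in ball (0:V) 1, (ContinuousLinearMap.id ℝ V + D x).det = volume.real (ball (0:V) 1) := by
    rw [setIntegral_congr_fun measurableSet_ball (fun x _ => hdet (D x))]
    rw [integral_finsetSum _ (fun i _ => (hInt1 (t i)).const_mul (c i))]
    simp_rw [integral_const_mul]
    rw [Finset.sum_congr rfl (fun i _ => by rw [hvol (t i) (ht i).1 (ht i).2]), ← Finset.sum_mul, hc, one_mul]
  have hzero : ∀ x ∈ ball (0:V) 1, (ContinuousLinearMap.id ℝ V + D x).det = 0 := by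
    intro x hx
    have hxc := ball_subset_closedBall hx
    have : ContinuousLinearMap.id ℝ V + D x = fderiv ℝ r x := by simp [D]
    rw [this]
    by_contra hne
    have hbij : LinearMap.range (fderiv ℝ r x : V →ₗ[ℝ] V) = ⊤ := by
      have h := (LinearMap.det_eq_zero_iff_ker_ne_bot (f := (fderiv ℝ r x : V →ₗ[ℝ] V))).not.1 hne
      push Not at h
      exact LinearMap.ker_eq_bot_iff_range_eq_top.1 h
    obtain ⟨v, hv⟩ : ∃ v, fderiv ℝ r x v = r x := LinearMap.range_eq_top.1 hbij (r x)
    have h1 : HasFDerivAt (fun y => inner ℝ (r y) (r y)) _ x := (hdiff x hxc).inner ℝ (hdiff x hxc)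
    have h2 : HasFDerivAt (fun y => inner ℝ (r y) (r y)) (0 : V →L[ℝ] ℝ) x := by
      refine (hasFDerivAt_const (1:ℝ) x).congr_of_eventuallyEq ?_
      filter_upwards [isOpen_ball.mem_nhds hx] with y hy
      rw [real_inner_self_eq_norm_sq, hr1 y (ball_subset_closedBall hy)]; norm_num
    have h3 := congrArg (fun L => L v) (h1.unique h2)
    simp [fderivInnerCLM_apply, hv, hr1 x hxc] at h3
  rw [setIntegral_congr_fun measurableSet_ball hzero] at hfin
  simp only [integral_zero] at hfin
  have hp : 0 < volume.real (ball (0:V) 1) := by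
    rw [measureReal_def]
    exact ENNReal.toReal_pos (measure_ball_pos volume _ one_pos).ne' measure_ball_lt_top.ne
  linarith

theorem bw_smooth {V : Type*} [NormedAddCommGroup V] [InnerProductSpace ℝ V]
    [FiniteDimensional ℝ V] (q : V → V) (hq : ContDiff ℝ 1 q)
    (hq1 : ∀ x, ‖x‖ ≤ 1 → ‖q x‖ ≤ 1) (hne : ∀ x, ‖x‖ ≤ 1 → q x ≠ x) : False := by
  let u : V → V := fun x => x - q x
  have hu : ContDiff ℝ 1 u := contDiff_id.sub hq
  let d : V → ℝ := fun x => (inner ℝ x (u x)) ^ 2 + ‖u x‖ ^ 2 * (1 - ‖x‖ ^ 2)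
  have hd : ContDiff ℝ 1 d :=
    ((contDiff_id.inner ℝ hu).pow 2).add ((hu.norm_sq ℝ).mul (contDiff_const.sub (contDiff_id.norm_sq ℝ)))
  let U : Set V := {x | u x ≠ 0 ∧ 0 < d x}
  have hU : IsOpen U := by
    refine IsOpen.inter ?_ ?_
    · exact isOpen_ne_fun hu.continuous continuous_const
    · exact isOpen_lt continuous_const hd.continuous
  have hu0 : ∀ x, ‖x‖ ≤ 1 → u x ≠ 0 := fun x hx h => hne x hx (sub_eq_zero.1 h).symm
  have hin : ∀ x, ‖x‖ = 1 → 0 < inner ℝ x (u x) := by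
    intro x hx
    have h1 : 0 < ‖u x‖ ^ 2 := by
      have := norm_pos_iff.2 (hu0 x hx.le); positivity
    have h2 : ‖u x‖ ^ 2 = ‖x‖ ^ 2 - 2 * inner ℝ x (q x) + ‖q x‖ ^ 2 := norm_sub_sq_real x (q x)
    have h3 := hq1 x hx.le
    have h4 : inner ℝ x (u x) = ‖x‖ ^ 2 - inner ℝ x (q x) := by
      simp only [u]; rw [inner_sub_right, real_inner_self_eq_norm_sq]
    rw [h4]
    rw [hx] at h2 ⊢
    nlinarith [norm_nonneg (q x)]
  have hdpos : ∀ x, ‖x‖ ≤ 1 → 0 < d x := by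
    intro x hx
    rcases hx.lt_or_eq with h | h
    · have h1 := norm_pos_iff.2 (hu0 x hx)
      have h2 : 0 < 1 - ‖x‖ ^ 2 := by nlinarith [norm_nonneg x]
      simp only [d]; positivity
    · have := hin x h
      simp only [d, h]; norm_num; positivity
  have hBU : closedBall (0:V) 1 ⊆ U := by
    intro x hx
    have hx : ‖x‖ ≤ 1 := by simpa using hx
    exact ⟨hu0 x hx, hdpos x hx⟩
  let l : V → ℝ := fun x => (-(inner ℝ x (u x)) + Real.sqrt (d x)) / ‖u x‖ ^ 2
  have hl : ContDiffOn ℝ 1 l U := by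
    refine ContDiffOn.div ?_ (hu.norm_sq ℝ).contDiffOn ?_
    · refine ((contDiff_id.inner ℝ hu).neg.contDiffOn).add ?_
      exact hd.contDiffOn.sqrt (fun x hx => hx.2.ne')
    · intro x hx
      have := norm_pos_iff.2 hx.1
      positivity
  refine bw_no_retraction U hU hBU (fun x => x + l x • u x)
    (contDiffOn_id.add (hl.smul hu.contDiffOn)) ?_ ?_
  · intro x hx
    have hx : ‖x‖ ≤ 1 := by simpa using hx
    have h1 := norm_pos_iff.2 (hu0 x hx)
    have h2 : ‖x + l x • u x‖ ^ 2 = 1 := by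
      rw [norm_add_sq_real, inner_smul_right, norm_smul, mul_pow, Real.norm_eq_abs, sq_abs]
      have h3 := Real.sq_sqrt (hdpos x hx).le
      have h4 : l x * ‖u x‖ ^ 2 = -(inner ℝ x (u x)) + Real.sqrt (d x) := by
        simp only [l]; field_simp
      have h5 : ‖u x‖ ^ 2 ≠ 0 := by positivity
      have h6 : d x = (inner ℝ x (u x)) ^ 2 + ‖u x‖ ^ 2 * (1 - ‖x‖ ^ 2) := rfl
      have h7 : Real.sqrt (d x) = l x * ‖u x‖ ^ 2 + inner ℝ x (u x) := by rw [h4]; ring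
      rw [h7, h6] at h3
      apply mul_left_cancel₀ h5
      linear_combination h3
    have := norm_nonneg (x + l x • u x)
    nlinarith
  · intro x hx
    have h1 := hin x hx
    have : d x = (inner ℝ x (u x)) ^ 2 := by simp [d, hx]
    simp [l, this, Real.sqrt_sq h1.le]

theorem bw_brouwer {V : Type*} [NormedAddCommGroup V] [InnerProductSpace ℝ V]
    [FiniteDimensional ℝ V] (f : V → V) (hf : Continuous f) (hf1 : ∀ x, ‖f x‖ ≤ 1) :
    ∃ x, f x = x := by
  by_contra hno
  push Not at hno
  obtain ⟨x0, hx0, hmin⟩ := (isCompact_closedBall (0:V) 1).exists_isMinOn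
    ⟨0, by simp⟩ (f := fun x => ‖f x - x‖) (by fun_prop)
  set ε := ‖f x0 - x0‖ with hε
  have hεpos : 0 < ε := norm_pos_iff.2 (sub_ne_zero.2 (hno x0))
  let η := ε / 2
  have hη : 0 < η := by positivity
  have hdense := ContinuousMap.dense_setOfPred_contDiff (E := V) (F := V) ⟨f, hf⟩
  rw [mem_closure_iff_nhds_basis
    (nhds_basis_uniformity uniformity_basis_dist.compactConvergenceUniformity)] at hdense
  obtain ⟨g, hg, hgf⟩ := hdense (closedBall 0 1, η) ⟨isCompact_closedBall _ _, hη⟩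
  have hgf' : ∀ x, ‖x‖ ≤ 1 → ‖g x - f x‖ < η := by
    intro x hx
    have := hgf x (by simpa using hx)
    simpa [dist_eq_norm] using this
  have hgn : ∀ x, ‖x‖ ≤ 1 → ‖g x‖ ≤ 1 + η := by
    intro x hx
    have h1 := hgf' x hx
    have h2 := norm_add_le (g x - f x) (f x)
    rw [sub_add_cancel] at h2
    linarith [hf1 x]
  have h1η : 0 < 1 + η := by positivity
  have hg' : ContDiff ℝ (⊤ : ℕ∞) g := by simpa using hg
  refine bw_smooth (fun x => (1 + η)⁻¹ • g x) ?_ ?_ ?_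
  · exact contDiff_const.smul (ContDiff.of_le hg' (by exact_mod_cast le_top))
  · intro x hx
    rw [norm_smul, norm_inv, Real.norm_of_nonneg h1η.le, inv_mul_le_iff₀ h1η]
    simpa using hgn x hx
  · intro x hx heq
    have heq : (1 + η)⁻¹ • g x = x := heq
    have h1 : g x = (1 + η) • x := (inv_smul_eq_iff₀ h1η.ne').1 heq
    have h2 := hgf' x hx
    have h3 : ε ≤ ‖f x - x‖ := hmin (show x ∈ closedBall (0:V) 1 by simpa using hx)
    have h4 : f x - x = η • x - (g x - f x) := by rw [h1]; module
    have h5 := norm_sub_le (η • x) (g x - f x)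
    rw [← h4, norm_smul, Real.norm_of_nonneg hη.le] at h5
    have : η * ‖x‖ ≤ η := mul_le_of_le_one_right hη.le hx
    simp only [η] at *
    linarith

theorem bw_simplex {ι : Type*} [Fintype ι] [Nonempty ι] (f : (ι → ℝ) → (ι → ℝ))
    (hf : ContinuousOn f (stdSimplex ℝ ι)) (hm : MapsTo f (stdSimplex ℝ ι) (stdSimplex ℝ ι)) :
    ∃ x ∈ stdSimplex ℝ ι, f x = x := by
  let S : (ι → ℝ) → ℝ := fun x => ∑ i, max (x i) 0
  let n : ℝ := Fintype.card ι
  have hn : 0 < n := by simp only [n]; exact_mod_cast Fintype.card_pos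
  let ρ : (ι → ℝ) → (ι → ℝ) := fun x i => (max (x i) 0 + max (1 - S x) 0 / n) / max 1 (S x)
  have hS : Continuous S := by fun_prop
  have hpos : ∀ x, 0 < max 1 (S x) := fun x => lt_max_of_lt_left one_pos
  have hρ : Continuous ρ := by
    refine continuous_pi fun i => ?_
    refine Continuous.div (by fun_prop) (by fun_prop) fun x => (hpos x).ne'
  have hρm : ∀ x, ρ x ∈ stdSimplex ℝ ι := by
    intro x
    refine ⟨fun i => by have := hpos x; simp only [ρ]; positivity, ?_⟩
    simp only [ρ]
    rw [← Finset.sum_div, Finset.sum_add_distrib, Finset.sum_const, Finset.card_univ, nsmul_eq_mul]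
    rw [div_eq_one_iff_eq (hpos x).ne', mul_div_cancel₀ _ hn.ne']
    change S x + _ = _
    rcases le_total (S x) 1 with h | h
    · rw [max_eq_left (by linarith), max_eq_left h]; ring
    · rw [max_eq_right (by linarith), max_eq_right h]; ring
  have hρid : ∀ x ∈ stdSimplex ℝ ι, ρ x = x := by
    intro x hx
    have h1 : S x = 1 := by
      rw [← hx.2]; exact Finset.sum_congr rfl fun i _ => max_eq_left (hx.1 i)
    ext i
    simp [ρ, h1, max_eq_left (hx.1 i)]
  let g : EuclideanSpace ℝ ι → EuclideanSpace ℝ ι := fun x => WithLp.toLp 2 (f (ρ (WithLp.ofLp x)))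
  have hg : Continuous g := by
    have : Continuous fun x : ι → ℝ => f (ρ x) := hf.comp_continuous hρ hρm
    exact (PiLp.continuous_toLp 2 _).comp (this.comp (PiLp.continuous_ofLp 2 _))
  have hg1 : ∀ x, ‖g x‖ ≤ 1 := by
    intro x
    have h := hm (hρm (WithLp.ofLp x))
    rw [EuclideanSpace.norm_eq, Real.sqrt_le_one]
    rw [← h.2]
    refine Finset.sum_le_sum fun i _ => ?_
    have h0 := h.1 i
    have h1 : f (ρ (WithLp.ofLp x)) i ≤ 1 := by
      rw [← h.2]; exact Finset.single_le_sum (fun j _ => h.1 j) (Finset.mem_univ i)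
    simp only [g, Real.norm_eq_abs, sq_abs]
    nlinarith
  obtain ⟨x, hx⟩ := bw_brouwer g hg hg1
  have hx' : f (ρ (WithLp.ofLp x)) = WithLp.ofLp x := congrArg WithLp.ofLp hx
  have hmem : WithLp.ofLp x ∈ stdSimplex ℝ ι := by rw [← hx']; exact hm (hρm _)
  refine ⟨WithLp.ofLp x, hmem, ?_⟩
  rw [hρid _ hmem] at hx'
  exact hx'

theorem bw_schauder {X : Type*} [NormedAddCommGroup X] [NormedSpace ℝ X] (C : Set X)
    (hCc : IsClosed C) (hCv : Convex ℝ C) (hCn : C.Nonempty) (f : C → X) (hf : Continuous f)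
    (hfm : ∀ x, f x ∈ C) (S : Set X) (hS : IsCompact S) (hfS : ∀ x, f x ∈ S) :
    ∃ x : C, f x = x := by
  classical
  have happ : ∀ ε : ℝ, 0 < ε → ∃ x : C, ‖f x - x‖ ≤ ε := by
    intro ε hε
    have htb : TotallyBounded (range f) := hS.totallyBounded.subset (range_subset_iff.2 hfS)
    obtain ⟨t, htr, htf, hcov⟩ := finite_approx_of_totallyBounded htb ε hε
    have : Fintype t := htf.fintype
    obtain ⟨c0, hc0⟩ := hCn
    have hne : Nonempty t := by
      have := hcov (mem_range_self ⟨c0, hc0⟩)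
      simp only [mem_iUnion] at this
      obtain ⟨y, hy, _⟩ := this
      exact ⟨⟨y, hy⟩⟩
    have htC : ∀ y : t, (y : X) ∈ C := by
      intro y
      obtain ⟨z, hz⟩ := htr y.2
      rw [← hz]; exact hfm z
    let wt : t → X → ℝ := fun y x => max (ε - ‖x - y‖) 0
    let W : X → ℝ := fun x => ∑ y, wt y x
    have hwt : ∀ y, Continuous (wt y) := fun y => by fun_prop
    have hW : Continuous W := by fun_prop
    have hwt0 : ∀ y x, 0 ≤ wt y x := fun y x => le_max_right _ _
    have hWpos : ∀ z : C, 0 < W (f z) := by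
      intro z
      have := hcov (mem_range_self z)
      simp only [mem_iUnion] at this
      obtain ⟨y, hy, hyz⟩ := this
      refine Finset.sum_pos' (fun i _ => hwt0 _ _) ⟨⟨y, hy⟩, Finset.mem_univ _, ?_⟩
      rw [mem_ball, dist_eq_norm] at hyz
      exact lt_max_of_lt_left (by simpa using hyz)
    let P : (t → ℝ) → X := fun s => ∑ y, s y • (y : X)
    have hP : Continuous P := by fun_prop
    have hPC : ∀ s ∈ stdSimplex ℝ t, P s ∈ C := fun s hs =>
      hCv.sum_mem (fun i _ => hs.1 i) hs.2 (fun i _ => htC i)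
    let fe : X → X := fun x => if h : x ∈ C then f ⟨x, h⟩ else 0
    have hfe : ∀ x (h : x ∈ C), fe x = f ⟨x, h⟩ := fun x h => by simp [fe, h]
    have hfec : ContinuousOn fe C := by
      rw [continuousOn_iff_continuous_domRestrict]
      convert hf using 1
      ext x
      simp [fe]
    let φ : (t → ℝ) → (t → ℝ) := fun s y => wt y (fe (P s)) / W (fe (P s))
    have hcomp : ContinuousOn (fun s => fe (P s)) (stdSimplex ℝ t) := hfec.comp hP.continuousOn hPC
    have hWp : ∀ s ∈ stdSimplex ℝ t, 0 < W (fe (P s)) := fun s hs => by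
      rw [hfe _ (hPC s hs)]; exact hWpos _
    have hφc : ContinuousOn φ (stdSimplex ℝ t) := by
      refine continuousOn_pi.2 fun y => ?_
      refine ContinuousOn.div ((hwt y).comp_continuousOn hcomp) (hW.comp_continuousOn hcomp) ?_
      exact fun s hs => (hWp s hs).ne'
    have hφm : MapsTo φ (stdSimplex ℝ t) (stdSimplex ℝ t) := by
      intro s hs
      refine ⟨fun y => div_nonneg (hwt0 _ _) (hWp s hs).le, ?_⟩
      simp only [φ]
      rw [← Finset.sum_div]
      exact div_self (hWp s hs).ne'
    obtain ⟨s, hs, hfix⟩ := bw_simplex φ hφc hφm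
    refine ⟨⟨P s, hPC s hs⟩, ?_⟩
    rw [← hfe]
    set z := fe (P s) with hz
    have h1 : z - P s = ∑ y, s y • (z - (y : X)) := by
      simp only [smul_sub, Finset.sum_sub_distrib, ← Finset.sum_smul]
      rw [hs.2, one_smul]
    change ‖z - P s‖ ≤ ε
    rw [h1]
    calc ‖∑ y, s y • (z - (y : X))‖ ≤ ∑ y, ‖s y • (z - (y : X))‖ := norm_sum_le _ _
      _ ≤ ∑ y, s y * ε := by
        refine Finset.sum_le_sum fun y _ => ?_
        rw [norm_smul, Real.norm_of_nonneg (hs.1 y)]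
        by_cases hy : ‖z - (y:X)‖ ≤ ε
        · exact mul_le_mul_of_nonneg_left hy (hs.1 y)
        · have : s y = 0 := by
            rw [← hfix]
            simp only [φ, wt, ← hz]
            rw [max_eq_right (by linarith), zero_div]
          simp [this]
      _ = ε := by rw [← Finset.sum_mul, hs.2, one_mul]
  choose x hx using fun k : ℕ => happ (1 / ((k:ℝ) + 1)) (by positivity)
  obtain ⟨a, ha, ψ, hψ, hlim⟩ := hS.tendsto_subseq (fun k => hfS (x k))
  have haC : a ∈ C := hCc.mem_of_tendsto hlim (Eventually.of_forall fun k => hfm _)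
  have hdiff : Tendsto (fun k => f (x k) - x k) atTop (𝓝 0) :=
    squeeze_zero_norm hx tendsto_one_div_add_atTop_nhds_zero_nat
  have hxl : Tendsto (fun k => ((x (ψ k) : C) : X)) atTop (𝓝 a) := by
    have := hlim.sub (hdiff.comp hψ.tendsto_atTop)
    simpa [Function.comp_def] using this
  have hxl' : Tendsto (fun k => x (ψ k)) atTop (𝓝 (⟨a, haC⟩ : C)) := tendsto_subtype_rng.2 hxl
  refine ⟨⟨a, haC⟩, ?_⟩
  exact tendsto_nhds_unique ((hf.tendsto _).comp hxl') hlim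

structure DESemigroup {E : Type*} [NormedAddCommGroup E] [NormedSpace ℝ E]
    (T : ℝ → E →L[ℝ] E) (M ν : ℝ) : Prop where
  cont : Continuous fun p : ℝ × E => T p.1 p.2
  bound : ∀ t, 0 ≤ t → ∀ x, ‖T t x‖ ≤ M * Real.exp (-ν * t) * ‖x‖
  semi : ∀ t s, 0 ≤ t → 0 ≤ s → ∀ x, T (t + s) x = T t (T s x)
  zero : ∀ x, T 0 x = x
  hM : 0 ≤ M
  hν : 0 < ν

namespace DESemigroup

variable {E : Type*} [NormedAddCommGroup E] [NormedSpace ℝ E]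
  {T : ℝ → E →L[ℝ] E} {M ν : ℝ} {ω : ℝ}

theorem cont_comp (H : DESemigroup T M ν) {α : Type*} [TopologicalSpace α] {a : α → ℝ} {h : α → E}
    (ha : Continuous a) (hh : Continuous h) : Continuous fun x => T (a x) (h x) :=
  H.cont.comp (ha.prodMk hh)

theorem exp_int (H : DESemigroup T M ν) (B : ℝ) :
    IntegrableOn (fun s => B * Real.exp (-ν * s)) (Ioi (0:ℝ)) :=
  (integrableOn_exp_mul_Ioi (by linarith [H.hν]) 0).const_mul B

theorem exp_val (H : DESemigroup T M ν) (B : ℝ) :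
    ∫ s in Ioi (0:ℝ), B * Real.exp (-ν * s) = B / ν := by
  have := H.hν
  rw [integral_const_mul, integral_exp_mul_Ioi (by linarith) 0]
  simp
  field_simp

theorem bound' (H : DESemigroup T M ν) [Fact (0 < ω)] (h : C(AddCircle ω, E)) {s : ℝ}
    (hs : 0 ≤ s) (y : AddCircle ω) : ‖T s (h y)‖ ≤ M * ‖h‖ * Real.exp (-ν * s) := by
  refine (H.bound s hs _).trans ?_
  have := h.norm_coe_le_norm y
  have h1 := H.hM
  calc _ ≤ M * Real.exp (-ν * s) * ‖h‖ := by gcongr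
    _ = _ := by ring

theorem cont_int (H : DESemigroup T M ν) (h : C(AddCircle ω, E)) (y : AddCircle ω) :
    Continuous fun s : ℝ => T s (h (y - (s : AddCircle ω))) :=
  H.cont_comp continuous_id
    (h.continuous.comp (continuous_const.sub (AddCircle.continuous_mk' ω)))

theorem int (H : DESemigroup T M ν) [Fact (0 < ω)] (h : C(AddCircle ω, E)) (y : AddCircle ω) :
    IntegrableOn (fun s : ℝ => T s (h (y - (s : AddCircle ω)))) (Ioi (0:ℝ)) := by
  refine Integrable.mono' (H.exp_int (M * ‖h‖)) (H.cont_int h y).aestronglyMeasurable ?_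
  filter_upwards [ae_restrict_mem measurableSet_Ioi] with s hs
  exact H.bound' h (le_of_lt hs) _

/-- The solution operator on periodic functions. -/
noncomputable def Q (H : DESemigroup T M ν) [Fact (0 < ω)] :
    C(AddCircle ω, E) →L[ℝ] C(AddCircle ω, E) :=
  LinearMap.mkContinuous
    { toFun := fun h =>
        ⟨fun y => ∫ s in Ioi (0:ℝ), T s (h (y - (s : AddCircle ω))), by
          refine continuous_of_dominated (bound := fun s => M * ‖h‖ * Real.exp (-ν * s))
            (fun y => (H.cont_int h y).aestronglyMeasurable) (fun y => ?_) (H.exp_int _) ?_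
          · filter_upwards [ae_restrict_mem measurableSet_Ioi] with s hs
            exact H.bound' h (le_of_lt hs) _
          · refine Eventually.of_forall fun s => ?_
            exact (T s).continuous.comp (h.continuous.comp (continuous_id.sub continuous_const))⟩
      map_add' := fun h g => by
        ext y
        simp only [ContinuousMap.coe_mk, ContinuousMap.add_apply, map_add]
        exact integral_add (H.int h y) (H.int g y)
      map_smul' := fun c h => by
        ext y
        simp only [ContinuousMap.coe_mk, ContinuousMap.smul_apply, map_smul, RingHom.id_apply]
        exact integral_smul _ _ }
    (M / ν) (fun h => by
      have h1 := H.hM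
      have h2 := H.hν
      rw [ContinuousMap.norm_le _ (by positivity)]
      intro y
      have : ‖∫ s in Ioi (0:ℝ), T s (h (y - (s : AddCircle ω)))‖
          ≤ ∫ s in Ioi (0:ℝ), M * ‖h‖ * Real.exp (-ν * s) := by
        refine norm_integral_le_of_norm_le (H.exp_int _) ?_
        filter_upwards [ae_restrict_mem measurableSet_Ioi] with s hs
        exact H.bound' h (le_of_lt hs) _
      rw [H.exp_val] at this
      refine this.trans (le_of_eq ?_)
      ring)

theorem Q_apply (H : DESemigroup T M ν) [Fact (0 < ω)] (h : C(AddCircle ω, E)) (y : AddCircle ω) :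
    H.Q h y = ∫ s in Ioi (0:ℝ), T s (h (y - (s : AddCircle ω))) := rfl

theorem Q_split (H : DESemigroup T M ν) [CompleteSpace E] [Fact (0 < ω)] (h : C(AddCircle ω, E)) (y : AddCircle ω)
    (a : ℝ) (ha : 0 ≤ a) :
    H.Q h y = T a (H.Q h (y - (a : AddCircle ω)))
      + ∫ s in (0:ℝ)..a, T s (h (y - (s : AddCircle ω))) := by
  have h1 := intervalIntegral.integral_interval_add_Ioi (H.int h y)
    ((H.int h y).mono_set (Ioi_subset_Ioi ha))
  rw [Q_apply, ← h1, add_comm]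
  congr 1
  rw [Q_apply, ← ContinuousLinearMap.integral_comp_comm _ (H.int h _)]
  have h2 := (measurePreserving_add_right volume a).setIntegral_preimage_emb
    (measurableEmbedding_addRight a) (fun s : ℝ => T s (h (y - (s : AddCircle ω)))) (Ioi a)
  rw [← h2]
  have h3 : (fun x => x + a) ⁻¹' Ioi a = Ioi (0:ℝ) := by ext x; simp
  rw [h3]
  refine setIntegral_congr_fun measurableSet_Ioi fun s hs => ?_
  have hs : 0 < s := hs
  have h4 : y - ((s + a : ℝ) : AddCircle ω) = y - (a : AddCircle ω) - (s : AddCircle ω) := by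
    rw [AddCircle.coe_add]; abel
  rw [h4, add_comm s a, H.semi a s ha hs.le]

theorem Q_mild (H : DESemigroup T M ν) [CompleteSpace E] [Fact (0 < ω)] (h : C(AddCircle ω, E)) (s t : ℝ)
    (hst : s ≤ t) :
    H.Q h (t : AddCircle ω) = T (t - s) (H.Q h (s : AddCircle ω))
      + ∫ r in s..t, T (t - r) (h (r : AddCircle ω)) := by
  rw [H.Q_split h t (t - s) (by linarith)]
  have h1 : ∀ r : ℝ, (t : AddCircle ω) - ((t - r : ℝ) : AddCircle ω) = (r : AddCircle ω) := by
    intro r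
    rw [AddCircle.coe_sub]; abel
  rw [h1]
  congr 1
  have := intervalIntegral.integral_comp_sub_left (a := s) (b := t)
    (fun x : ℝ => T x (h ((t : AddCircle ω) - (x : AddCircle ω)))) t
  rw [sub_self] at this
  rw [← this]
  simp_rw [h1]

theorem Q_growth (H : DESemigroup T M ν) [CompleteSpace E] [Fact (0 < ω)] (h : C(AddCircle ω, E)) (B : ℝ)
    (hB : ∀ σ, 0 ≤ σ → ∀ y, ‖T σ (h y)‖ ≤ B * Real.exp (-ν * σ)) :
    ∀ σ, 0 ≤ σ → ∀ y, ‖T σ (H.Q h y)‖ ≤ (B / ν) * Real.exp (-ν * σ) := by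
  intro σ hσ y
  rw [Q_apply, ← ContinuousLinearMap.integral_comp_comm _ (H.int h _)]
  have : ‖∫ s in Ioi (0:ℝ), T σ (T s (h (y - (s : AddCircle ω))))‖
      ≤ ∫ s in Ioi (0:ℝ), (B * Real.exp (-ν * σ)) * Real.exp (-ν * s) := by
    refine norm_integral_le_of_norm_le (H.exp_int _) ?_
    filter_upwards [ae_restrict_mem measurableSet_Ioi] with s hs
    have hs : 0 < s := hs
    rw [← H.semi σ s hσ hs.le]
    refine (hB _ (by linarith) _).trans (le_of_eq ?_)
    rw [mul_assoc, ← Real.exp_add]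
    ring_nf
  rw [H.exp_val] at this
  refine this.trans (le_of_eq ?_)
  ring

theorem cone_integral {K : Set E} [CompleteSpace E] (hKclosed : IsClosed K)
    (hKadd : ∀ x ∈ K, ∀ y ∈ K, x + y ∈ K)
    (hKsmul : ∀ c : ℝ, 0 ≤ c → ∀ x ∈ K, c • x ∈ K) (hK0 : (0:E) ∈ K)
    {μ : Measure ℝ} {g : ℝ → E} (hg : Integrable g μ) (hgK : ∀ᵐ s ∂μ, g s ∈ K) :
    ∫ s, g s ∂μ ∈ K := by
  have hconv : Convex ℝ K := fun x hx y hy a b ha hb _ =>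
    hKadd _ (hKsmul a ha x hx) _ (hKsmul b hb y hy)
  by_contra hn
  obtain ⟨f, u, hfu, hu⟩ := geometric_hahn_banach_closed_point hconv hKclosed hn
  have hu0 : 0 < u := by simpa using hfu 0 hK0
  have hf : ∀ x ∈ K, f x ≤ 0 := by
    intro x hx
    by_contra hpos
    push Not at hpos
    have := hfu _ (hKsmul (u / f x) (by positivity) x hx)
    rw [map_smul, smul_eq_mul, div_mul_cancel₀ _ hpos.ne'] at this
    exact lt_irrefl _ this
  have h1 : f (∫ s, g s ∂μ) ≤ 0 := by
    rw [← ContinuousLinearMap.integral_comp_comm f hg]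
    exact integral_nonpos_of_ae (hgK.mono fun s hs => hf _ hs)
  linarith

theorem Q_pos (H : DESemigroup T M ν) [Fact (0 < ω)] {K : Set E} [CompleteSpace E] (hKclosed : IsClosed K)
    (hKadd : ∀ x ∈ K, ∀ y ∈ K, x + y ∈ K)
    (hKsmul : ∀ c : ℝ, 0 ≤ c → ∀ x ∈ K, c • x ∈ K) (hK0 : (0:E) ∈ K)
    (hTpos : ∀ t : ℝ, 0 ≤ t → Set.MapsTo (T t) K K) (h : C(AddCircle ω, E))
    (hh : ∀ y, h y ∈ K) (y : AddCircle ω) : H.Q h y ∈ K := by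
  rw [Q_apply]
  refine cone_integral hKclosed hKadd hKsmul hK0 (H.int h y) ?_
  filter_upwards [ae_restrict_mem measurableSet_Ioi] with s hs
  exact hTpos s (le_of_lt hs) (hh _)

theorem Q_compact (H : DESemigroup T M ν) [CompleteSpace E] [Fact (0 < ω)]
    (hTcompact : ∀ t : ℝ, 0 < t → IsCompactOperator (T t)) (R : ℝ) (hR : 0 ≤ R) :
    ∃ S : Set (C(AddCircle ω, E)), IsCompact S ∧ ∀ h : C(AddCircle ω, E), ‖h‖ ≤ R → H.Q h ∈ S := by
  have hM := H.hM
  have hν := H.hν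
  let P : Set E := {x | ∃ h : C(AddCircle ω, E), ‖h‖ ≤ R ∧ ∃ y, x = H.Q h y}
  -- small-time part
  have hsmall : ∀ h : C(AddCircle ω, E), ‖h‖ ≤ R → ∀ y, ∀ a : ℝ, 0 ≤ a →
      ‖∫ s in (0:ℝ)..a, T s (h (y - (s : AddCircle ω)))‖ ≤ M * R * a := by
    intro h hh y a ha
    have := intervalIntegral.norm_integral_le_of_norm_le_const (a := (0:ℝ)) (b := a) (C := M * R)
      (f := fun s : ℝ => T s (h (y - (s : AddCircle ω)))) ?_
    · rwa [sub_zero, abs_of_nonneg ha] at this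
    · intro s hs
      rw [uIoc_of_le ha] at hs
      refine (H.bound' h hs.1.le _).trans ?_
      have : Real.exp (-ν * s) ≤ 1 := Real.exp_le_one_iff.2 (by nlinarith [hs.1])
      calc M * ‖h‖ * Real.exp (-ν * s) ≤ M * ‖h‖ * 1 := by gcongr
        _ ≤ M * R := by rw [mul_one]; gcongr
  have hQb : ∀ h : C(AddCircle ω, E), ‖h‖ ≤ R → ∀ y, ‖H.Q h y‖ ≤ ‖(H.Q : C(AddCircle ω, E) →L[ℝ] _)‖ * R := by
    intro h hh y
    refine ((H.Q h).norm_coe_le_norm y).trans ((H.Q.le_opNorm h).trans ?_)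
    gcongr
  have hPtb : TotallyBounded P := by
    rw [Metric.totallyBounded_iff]
    intro ε hε
    let a : ℝ := ε / (2 * (M * R + 1))
    have ha : 0 < a := by positivity
    have haε : M * R * a < ε / 2 := by
      have : (M * R + 1) * a = ε / 2 := by simp only [a]; field_simp
      nlinarith
    have hc : TotallyBounded (T a '' closedBall 0 (‖(H.Q : C(AddCircle ω, E) →L[ℝ] _)‖ * R)) := by
      have := (hTcompact a ha).isCompact_closure_image_closedBall (𝕜₁ := ℝ) (‖(H.Q : C(AddCircle ω, E) →L[ℝ] _)‖ * R)
      exact this.totallyBounded.subset subset_closure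
    obtain ⟨t, ht, hcov⟩ := Metric.totallyBounded_iff.1 hc (ε / 2) (by positivity)
    refine ⟨t, ht, ?_⟩
    rintro x ⟨h, hh, y, rfl⟩
    have h1 := hcov ⟨H.Q h (y - (a : AddCircle ω)), by simpa using hQb h hh _, rfl⟩
    simp only [mem_iUnion, mem_ball, exists_prop] at h1 ⊢
    obtain ⟨z, hz, hzd⟩ := h1
    refine ⟨z, hz, ?_⟩
    rw [H.Q_split h y a ha.le, dist_eq_norm]
    rw [dist_eq_norm] at hzd
    have h2 := hsmall h hh y a ha.le
    have h3 := norm_add_le (T a (H.Q h (y - (a : AddCircle ω))) - z)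
      (∫ s in (0:ℝ)..a, T s (h (y - (s : AddCircle ω))))
    rw [add_sub_right_comm]
    linarith
  have hPc : IsCompact (closure P) := hPtb.closure.isCompact_of_isClosed isClosed_closure
  -- uniform modulus
  have hmod : ∀ ε : ℝ, 0 < ε → ∃ δ : ℝ, 0 < δ ∧ ∀ d : ℝ, 0 ≤ d → d < δ →
      ∀ h : C(AddCircle ω, E), ‖h‖ ≤ R → ∀ y, ‖H.Q h (y + (d : AddCircle ω)) - H.Q h y‖ < ε := by
    intro ε hε
    have hev : ∀ᶠ d in 𝓝 (0:ℝ), ∀ x ∈ closure P, ‖T d x - x‖ < ε / 2 := by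
      refine hPc.eventually_forall_of_forall_eventually fun x _ => ?_
      have hc : Continuous fun z : ℝ × E => ‖T z.1 z.2 - z.2‖ := (H.cont.sub continuous_snd).norm
      exact hc.continuousAt.eventually_lt continuousAt_const (by simp [H.zero]; positivity)
    have hev2 : ∀ᶠ d in 𝓝 (0:ℝ), M * R * d < ε / 2 := by
      have hc : Continuous fun d : ℝ => M * R * d := by fun_prop
      exact hc.continuousAt.eventually_lt continuousAt_const (by simp; positivity)
    obtain ⟨δ, hδ, hδ'⟩ := Metric.eventually_nhds_iff.1 (hev.and hev2)
    refine ⟨δ, hδ, fun d hd0 hd h hh y => ?_⟩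
    obtain ⟨h1, h2⟩ := hδ' (y := d) (by rw [Real.dist_eq, sub_zero, abs_of_nonneg hd0]; exact hd)
    have h3 := h1 (H.Q h y) (subset_closure ⟨h, hh, y, rfl⟩)
    have h4 := hsmall h hh (y + (d : AddCircle ω)) d hd0
    rw [H.Q_split h (y + (d : AddCircle ω)) d hd0, add_sub_cancel_right, add_sub_right_comm]
    refine (norm_add_le _ _).trans_lt ?_
    linarith
  let e := ContinuousMap.isometryEquivBoundedOfCompact (AddCircle ω) E
  let A : Set (BoundedContinuousFunction (AddCircle ω) E) :=
    {g | ∃ h : C(AddCircle ω, E), ‖h‖ ≤ R ∧ g = e (H.Q h)}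
  have hA : IsCompact (closure A) := by
    refine BoundedContinuousFunction.arzela_ascoli (closure P) hPc A ?_ ?_
    · rintro g y ⟨h, hh, rfl⟩
      exact subset_closure ⟨h, hh, y, rfl⟩
    · intro y0
      rw [Metric.equicontinuousAt_iff_right]
      intro ε hε
      obtain ⟨δ, hδ, hd⟩ := hmod ε hε
      have hnb : (fun y : AddCircle ω => y - y0) ⁻¹' ((fun t : ℝ => (t : AddCircle ω)) '' ball 0 δ) ∈ 𝓝 y0 := by
        refine (continuous_id.sub continuous_const).continuousAt.preimage_mem_nhds ?_
        have : (fun t : ℝ => (t : AddCircle ω)) '' ball 0 δ ∈ 𝓝 ((0:ℝ) : AddCircle ω) :=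
          QuotientAddGroup.isOpenMap_coe.image_mem_nhds (ball_mem_nhds 0 hδ)
        simpa using this
      filter_upwards [hnb] with y hy
      rintro ⟨g, h, hh, rfl⟩
      obtain ⟨d, hdm, hdy⟩ := hy
      have hdy : (d : AddCircle ω) = y - y0 := hdy
      have hdm : |d| < δ := by simpa using hdm
      change dist (H.Q h y0) (H.Q h y) < ε
      rw [dist_eq_norm]
      rcases le_total 0 d with h0 | h0
      · rw [abs_of_nonneg h0] at hdm
        have := hd d h0 hdm h hh y0
        rw [hdy, add_sub_cancel] at this
        rwa [norm_sub_rev]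
      · rw [abs_of_nonpos h0] at hdm
        have := hd (-d) (by linarith) hdm h hh y
        rw [AddCircle.coe_neg, hdy] at this
        rwa [show y + -(y - y0) = y0 by abel] at this
  refine ⟨e.symm '' closure A, hA.image e.symm.continuous, fun h hh => ?_⟩
  exact ⟨e (H.Q h), subset_closure ⟨h, hh, rfl⟩, e.symm_apply_apply _⟩

end DESemigroup

theorem de_supersolution {E : Type*} [NormedAddCommGroup E] [NormedSpace ℝ E] [CompleteSpace E]
    {T : ℝ → E →L[ℝ] E} {M ν ω : ℝ} (H : DESemigroup T M ν) [Fact (0 < ω)] (τ : ℝ)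
    {K : Set E} (hKclosed : IsClosed K)
    (hKadd : ∀ x ∈ K, ∀ y ∈ K, x + y ∈ K)
    (hKsmul : ∀ c : ℝ, 0 ≤ c → ∀ x ∈ K, c • x ∈ K) (hK0 : (0:E) ∈ K)
    (hTpos : ∀ t : ℝ, 0 ≤ t → Set.MapsTo (T t) K K)
    (C₁ C₂ : ℝ) (hC₁ : 0 < C₁) (hC₂ : 0 < C₂) (hC : C₁ + C₂ < ν)
    (h₀ : C(AddCircle ω, E)) (hh₀ : ∀ y, h₀ y ∈ K) :
    ∃ w b : C(AddCircle ω, E), (∀ y, w y ∈ K) ∧ w = H.Q b ∧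
      ∀ y, b y = C₁ • w y + C₂ • w (y - (τ : AddCircle ω)) + h₀ y := by
  have hM := H.hM
  have hν := H.hν
  let sh : C(AddCircle ω, AddCircle ω) := ⟨fun y => y - (τ : AddCircle ω), by fun_prop⟩
  let Sh : C(AddCircle ω, E) →L[ℝ] C(AddCircle ω, E) :=
    LinearMap.mkContinuous
      { toFun := fun h => h.comp sh
        map_add' := fun _ _ => rfl
        map_smul' := fun _ _ => rfl } 1 (fun h => by
          rw [one_mul, ContinuousMap.norm_le _ (norm_nonneg _)]
          exact fun y => h.norm_coe_le_norm _)
  have hSh : ∀ h y, Sh h y = h (y - (τ : AddCircle ω)) := fun h y => rfl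
  let L : C(AddCircle ω, E) →L[ℝ] C(AddCircle ω, E) :=
    H.Q.comp (C₁ • ContinuousLinearMap.id ℝ _ + C₂ • Sh)
  have hL : ∀ h, L h = H.Q (C₁ • h + C₂ • Sh h) := fun h => rfl
  let a : ℕ → C(AddCircle ω, E) := fun n => Nat.rec (H.Q h₀) (fun _ h => L h) n
  have ha0 : a 0 = H.Q h₀ := rfl
  have has : ∀ n, a (n + 1) = L (a n) := fun n => rfl
  let k := (C₁ + C₂) / ν
  have hk0 : 0 ≤ k := by positivity
  have hk1 : k < 1 := by simp only [k]; rwa [div_lt_one hν]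
  let B := M * ‖H.Q h₀‖
  have hgrow : ∀ n, ∀ σ, 0 ≤ σ → ∀ y, ‖T σ (a n y)‖ ≤ (B * k ^ n) * Real.exp (-ν * σ) := by
    intro n
    induction n with
    | zero =>
      intro σ hσ y
      rw [pow_zero, mul_one]
      exact H.bound' _ hσ y
    | succ n ih =>
      intro σ hσ y
      rw [has, hL]
      have := H.Q_growth (C₁ • a n + C₂ • Sh (a n)) ((C₁ + C₂) * (B * k ^ n)) ?_ σ hσ y
      · refine this.trans (le_of_eq ?_)
        simp only [k]
        rw [pow_succ]; ring
      · intro σ hσ y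
        rw [ContinuousMap.add_apply, ContinuousMap.smul_apply, ContinuousMap.smul_apply, hSh,
          map_add, map_smul, map_smul]
        refine (norm_add_le _ _).trans ?_
        rw [norm_smul, norm_smul, Real.norm_of_nonneg hC₁.le, Real.norm_of_nonneg hC₂.le]
        have h1 := mul_le_mul_of_nonneg_left (ih σ hσ y) hC₁.le
        have h2 := mul_le_mul_of_nonneg_left (ih σ hσ (y - (τ : AddCircle ω))) hC₂.le
        linarith
  have hB : 0 ≤ B := by positivity
  have hnorm : ∀ n, ‖a n‖ ≤ B * k ^ n := by
    intro n
    rw [ContinuousMap.norm_le _ (by positivity)]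
    intro y
    simpa [H.zero] using hgrow n 0 le_rfl y
  have hsum : Summable a :=
    Summable.of_norm_bounded ((summable_geometric_of_lt_one hk0 hk1).mul_left B) hnorm
  let w := ∑' n, a n
  have hw : w = L w + H.Q h₀ := by
    have h1 : w = a 0 + ∑' n, a (n + 1) := hsum.tsum_eq_zero_add
    have h2 : L w = ∑' n, L (a n) := L.map_tsum hsum
    rw [h2, add_comm, ← ha0]
    exact h1
  have hapos : ∀ n y, a n y ∈ K := by
    intro n
    induction n with
    | zero => exact fun y => H.Q_pos hKclosed hKadd hKsmul hK0 hTpos h₀ hh₀ y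
    | succ n ih =>
      intro y
      rw [has, hL]
      refine H.Q_pos hKclosed hKadd hKsmul hK0 hTpos _ (fun y => ?_) y
      rw [ContinuousMap.add_apply, ContinuousMap.smul_apply, ContinuousMap.smul_apply, hSh]
      exact hKadd _ (hKsmul _ hC₁.le _ (ih _)) _ (hKsmul _ hC₂.le _ (ih _))
  refine ⟨w, C₁ • w + C₂ • Sh w + h₀, ?_, ?_, ?_⟩
  · intro y
    have h1 : Tendsto (fun n => (∑ i ∈ Finset.range n, a i) y) atTop (𝓝 (w y)) :=
      ((continuous_eval_const y).tendsto w).comp hsum.hasSum.tendsto_sum_nat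
    refine hKclosed.mem_of_tendsto h1 (Eventually.of_forall fun n => ?_)
    induction n with
    | zero => simpa using hK0
    | succ n ih =>
      rw [Finset.sum_range_succ, ContinuousMap.add_apply]
      exact hKadd _ ih _ (hapos n y)
  · rw [map_add, ← hL]
    exact hw
  · intro y
    rfl

theorem de_main {E : Type*} [NormedAddCommGroup E] [NormedSpace ℝ E] [CompleteSpace E]
    {T : ℝ → E →L[ℝ] E} {M ν ω : ℝ} (H : DESemigroup T M ν) (hω : 0 < ω) (τ : ℝ)
    {K : Set E} (hKclosed : IsClosed K)
    (hKadd : ∀ x ∈ K, ∀ y ∈ K, x + y ∈ K)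
    (hKsmul : ∀ c : ℝ, 0 ≤ c → ∀ x ∈ K, c • x ∈ K)
    (N : ℝ) (hN : 0 < N)
    (hKnormal : ∀ x y : E, x ∈ K → y - x ∈ K → ‖x‖ ≤ N * ‖y‖)
    (hTpos : ∀ t : ℝ, 0 ≤ t → Set.MapsTo (T t) K K)
    (hTcompact : ∀ t : ℝ, 0 < t → IsCompactOperator (T t))
    (F : ℝ → E → E → E)
    (hFcont : ContinuousOn (fun p : ℝ × E × E => F p.1 p.2.1 p.2.2)
      (Set.univ ×ˢ K ×ˢ K))
    (hFmaps : ∀ t : ℝ, ∀ x ∈ K, ∀ y ∈ K, F t x y ∈ K)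
    (hFper : ∀ t : ℝ, ∀ x ∈ K, ∀ y ∈ K, F (t + ω) x y = F t x y)
    (C₁ C₂ : ℝ) (hC₁ : 0 < C₁) (hC₂ : 0 < C₂) (hC : C₁ + C₂ < ν)
    (h₀ : ℝ → E) (hh₀cont : Continuous h₀) (hh₀per : ∀ t : ℝ, h₀ (t + ω) = h₀ t)
    (hh₀pos : ∀ t : ℝ, h₀ t ∈ K)
    (hH1 : ∀ t : ℝ, ∀ x ∈ K, ∀ y ∈ K,
      C₁ • x + C₂ • y + h₀ t - F t x y ∈ K) :
    ∃ u : ℝ → E, Continuous u ∧ (∀ t : ℝ, u t ∈ K) ∧ (∀ t : ℝ, u (t + ω) = u t) ∧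
      ∀ s t : ℝ, s ≤ t →
        u t = T (t - s) (u s) + ∫ r in s..t, T (t - r) (F r (u r) (u (r - τ))) := by
  haveI : Fact (0 < ω) := ⟨hω⟩
  have hK0 : (0:E) ∈ K := by simpa using hKsmul 0 le_rfl _ (hh₀pos 0)
  have hquot : IsOpenQuotientMap (fun t : ℝ => (t : AddCircle ω)) :=
    QuotientAddGroup.isOpenQuotientMap_mk
  let rep : AddCircle ω → ℝ := fun y => AddCircle.equivIco ω 0 y
  have hrep : ∀ {α : Type _} (f : ℝ → α), Function.Periodic f ω → ∀ t : ℝ,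
      f (rep (t : AddCircle ω)) = f t := by
    intro α f hf t
    rw [← hf.lift_coe, ← hf.lift_coe t]
    congr 1
    exact AddCircle.coe_equivIco
  let g₀ : C(AddCircle ω, E) := ⟨fun y => h₀ (rep y), by
    rw [hquot.isQuotientMap.continuous_iff]
    have : ((fun y => h₀ (rep y)) ∘ fun t : ℝ => (t : AddCircle ω)) = h₀ :=
      funext fun t => hrep h₀ hh₀per t
    rw [this]
    exact hh₀cont⟩
  have hg₀ : ∀ y, g₀ y = h₀ (rep y) := fun y => rfl
  obtain ⟨w, b, hwK, hwb, hb⟩ := de_supersolution H τ hKclosed hKadd hKsmul hK0 hTpos C₁ C₂ hC₁ hC₂ hC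
    g₀ (fun y => hh₀pos _)
  let D : Set C(AddCircle ω, E) := {v | ∀ y, v y ∈ K ∧ w y - v y ∈ K}
  have hDK : ∀ (v : D) y, v.1 y ∈ K := fun v y => (v.2 y).1
  have hDcl : IsClosed D := by
    have : D = ⋂ y, ((fun v : C(AddCircle ω, E) => v y) ⁻¹' K ∩ (fun v : C(AddCircle ω, E) => w y - v y) ⁻¹' K) := by
      ext v; simp [D]
    rw [this]
    refine isClosed_iInter fun y => (hKclosed.preimage (continuous_eval_const y)).inter
      (hKclosed.preimage (continuous_const.sub (continuous_eval_const y)))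
  have hDcv : Convex ℝ D := by
    intro v hv u hu a c ha hc hac y
    constructor
    · exact hKadd _ (hKsmul a ha _ (hv y).1) _ (hKsmul c hc _ (hu y).1)
    · have : w y - (a • v + c • u) y = a • (w y - v y) + c • (w y - u y) := by
        have h1 : w y = (a + c) • w y := by rw [hac, one_smul]
        rw [ContinuousMap.add_apply, ContinuousMap.smul_apply, ContinuousMap.smul_apply]
        nth_rewrite 1 [h1]
        module
      rw [this]
      exact hKadd _ (hKsmul a ha _ (hv y).2) _ (hKsmul c hc _ (hu y).2)
  have hDne : D.Nonempty := ⟨0, fun y => ⟨hK0, by simpa using hwK y⟩⟩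
  -- the superposition operator
  let Φ : D → AddCircle ω → E := fun v y => F (rep y) (v.1 y) (v.1 (y - (τ : AddCircle ω)))
  have hΦcoe : ∀ (v : D) (t : ℝ), Φ v (t : AddCircle ω)
      = F t (v.1 (t : AddCircle ω)) (v.1 ((t : AddCircle ω) - (τ : AddCircle ω))) := by
    intro v t
    exact hrep (fun t' => F t' (v.1 (t : AddCircle ω)) (v.1 ((t : AddCircle ω) - (τ : AddCircle ω))))
      (fun t' => hFper t' _ (hDK v _) _ (hDK v _)) t
  have hΦc : Continuous (Function.uncurry Φ) := by
    have hq : IsOpenQuotientMap (Prod.map (id : D → D) (fun t : ℝ => (t : AddCircle ω))) :=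
      IsOpenQuotientMap.id.prodMap hquot
    rw [hq.isQuotientMap.continuous_iff]
    have : (Function.uncurry Φ ∘ Prod.map (id : D → D) (fun t : ℝ => (t : AddCircle ω)))
        = fun p : D × ℝ => F p.2 (p.1.1 (p.2 : AddCircle ω))
            (p.1.1 ((p.2 : AddCircle ω) - (τ : AddCircle ω))) := by
      funext p
      exact hΦcoe p.1 p.2
    rw [this]
    have hcoe : Continuous fun p : D × ℝ => (p.2 : AddCircle ω) :=
      (AddCircle.continuous_mk' ω).comp continuous_snd
    have hval : Continuous fun p : D × ℝ => (p.1.1 : C(AddCircle ω, E)) :=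
      continuous_subtype_val.comp continuous_fst
    have hm : Continuous fun p : D × ℝ => (p.2, p.1.1 (p.2 : AddCircle ω),
        p.1.1 ((p.2 : AddCircle ω) - (τ : AddCircle ω))) :=
      continuous_snd.prodMk ((hval.eval hcoe).prodMk (hval.eval (hcoe.sub continuous_const)))
    exact hFcont.comp_continuous hm (fun p => ⟨mem_univ _, hDK _ _, hDK _ _⟩)
  let NF : D → C(AddCircle ω, E) := fun v => ⟨Φ v, hΦc.comp (Continuous.prodMk_right v)⟩
  have hNF : ∀ v y, NF v y = Φ v y := fun v y => rfl
  have hNFc : Continuous NF := ContinuousMap.continuous_of_continuous_uncurry _ hΦc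
  have hNFK : ∀ v y, NF v y ∈ K := fun v y => hFmaps _ _ (hDK v _) _ (hDK v _)
  have hNFb : ∀ v y, b y - NF v y ∈ K := by
    intro v y
    have h1 := hH1 (rep y) _ (hDK v y) _ (hDK v (y - (τ : AddCircle ω)))
    have h2 := hKsmul C₁ hC₁.le _ (v.2 y).2
    have h3 := hKsmul C₂ hC₂.le _ (v.2 (y - (τ : AddCircle ω))).2
    have h4 := hKadd _ (hKadd _ h1 _ h2) _ h3
    convert h4 using 1
    rw [hb, hg₀, hNF]
    simp only [Φ]
    module
  have hNFn : ∀ v, ‖NF v‖ ≤ N * ‖b‖ := by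
    intro v
    rw [ContinuousMap.norm_le _ (by positivity)]
    intro y
    refine (hKnormal _ _ (hNFK v y) (hNFb v y)).trans ?_
    gcongr
    exact b.norm_coe_le_norm y
  obtain ⟨S, hS, hQS⟩ := H.Q_compact (ω := ω) hTcompact (N * ‖b‖) (by positivity)
  obtain ⟨v, hv⟩ := bw_schauder D hDcl hDcv hDne (fun v => H.Q (NF v))
    (H.Q.continuous.comp hNFc)
    (fun v y => by
      refine ⟨H.Q_pos hKclosed hKadd hKsmul hK0 hTpos _ (hNFK v) y, ?_⟩
      have h1 := H.Q_pos hKclosed hKadd hKsmul hK0 hTpos (b - NF v) (hNFb v) y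
      rw [map_sub, ← hwb] at h1
      exact h1) S hS (fun v => hQS _ (hNFn v))
  have hv : H.Q (NF v) = v.1 := hv
  refine ⟨fun t => v.1 (t : AddCircle ω), v.1.continuous.comp (AddCircle.continuous_mk' ω),
    fun t => hDK v _, fun t => ?_, fun s t hst => ?_⟩
  · simp only [AddCircle.coe_add, AddCircle.coe_period, add_zero]
  · have h1 := H.Q_mild (NF v) s t hst
    rw [hv] at h1
    simp only
    rw [h1]
    congr 1
    refine intervalIntegral.integral_congr fun r _ => ?_
    simp only [AddCircle.coe_sub]
    rw [hNF, hΦcoe]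

end DelayEvolution

/-- **Theorem 1.1.** Under the sublinear order condition (H1) with
`C₁ + C₂ < ν = |ν₀|`, the delay evolution equation
`u'(t) + A u(t) = F(t, u(t), u(t - τ))` has at least one positive ω-periodic
mild solution. The order `x ≤ y` is encoded as `y - x ∈ K`. -/
theorem stmt6
    {E : Type*} [NormedAddCommGroup E] [NormedSpace ℝ E] [CompleteSpace E]
    -- the positive cone `K`:
    (K : Set E) (hKclosed : IsClosed K)
    (hKadd : ∀ x ∈ K, ∀ y ∈ K, x + y ∈ K)
    (hKsmul : ∀ c : ℝ, 0 ≤ c → ∀ x ∈ K, c • x ∈ K)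
    (hKpointed : ∀ x : E, x ∈ K → -x ∈ K → x = 0)
    -- `K` is normal with normal constant `N`:
    (N : ℝ) (hN : 0 < N)
    (hKnormal : ∀ x y : E, x ∈ K → y - x ∈ K → ‖x‖ ≤ N * ‖y‖)
    -- `T` is a positive compact C₀-semigroup with `‖T t‖ ≤ M e^{-ν t}`:
    (T : ℝ → E →L[ℝ] E) (M ν : ℝ) (hM : 1 ≤ M) (hν : 0 < ν)
    (hT0 : T 0 = ContinuousLinearMap.id ℝ E)
    (hTsemi : ∀ t s : ℝ, 0 ≤ t → 0 ≤ s → T (t + s) = (T t).comp (T s))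
    (hTcont : ∀ x : E, ContinuousOn (fun t : ℝ => T t x) (Set.Ici (0 : ℝ)))
    (hTnorm : ∀ t : ℝ, 0 ≤ t → ‖T t‖ ≤ M * Real.exp (-ν * t))
    (hTpos : ∀ t : ℝ, 0 ≤ t → Set.MapsTo (T t) K K)
    (hTcompact : ∀ t : ℝ, 0 < t → IsCompactOperator (T t))
    (ω τ : ℝ) (hω : 0 < ω) (hτ : 0 < τ)
    -- `F : ℝ × K × K → K` continuous and ω-periodic in `t`:
    (F : ℝ → E → E → E)
    (hFcont : ContinuousOn (fun p : ℝ × E × E => F p.1 p.2.1 p.2.2)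
      (Set.univ ×ˢ K ×ˢ K))
    (hFmaps : ∀ t : ℝ, ∀ x ∈ K, ∀ y ∈ K, F t x y ∈ K)
    (hFper : ∀ t : ℝ, ∀ x ∈ K, ∀ y ∈ K, F (t + ω) x y = F t x y)
    -- (H1):
    (C₁ C₂ : ℝ) (hC₁ : 0 < C₁) (hC₂ : 0 < C₂) (hC : C₁ + C₂ < ν)
    (h₀ : ℝ → E) (hh₀cont : Continuous h₀) (hh₀per : ∀ t : ℝ, h₀ (t + ω) = h₀ t)
    (hh₀pos : ∀ t : ℝ, h₀ t ∈ K)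
    (hH1 : ∀ t : ℝ, ∀ x ∈ K, ∀ y ∈ K,
      C₁ • x + C₂ • y + h₀ t - F t x y ∈ K) :
    -- there exists a positive ω-periodic mild solution:
    ∃ u : ℝ → E, Continuous u ∧ (∀ t : ℝ, u t ∈ K) ∧ (∀ t : ℝ, u (t + ω) = u t) ∧
      ∀ s t : ℝ, s ≤ t →
        u t = T (t - s) (u s) + ∫ r in s..t, T (t - r) (F r (u r) (u (r - τ))) := by
  classical
  let S : ℝ → E →L[ℝ] E := fun t => T (max t 0)
  have hS : ∀ t, 0 ≤ t → S t = T t := fun t ht => by simp only [S, max_eq_left ht]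
  have hM0 : 0 ≤ M := by linarith
  have hTb : ∀ t, 0 ≤ t → ∀ x, ‖T t x‖ ≤ M * Real.exp (-ν * t) * ‖x‖ := fun t ht x =>
    ((T t).le_opNorm x).trans (mul_le_mul_of_nonneg_right (hTnorm t ht) (norm_nonneg _))
  have hSM : ∀ t x, ‖S t x‖ ≤ M * ‖x‖ := by
    intro t x
    refine (hTb _ (le_max_right t 0) x).trans ?_
    have h1 : Real.exp (-ν * max t 0) ≤ 1 :=
      Real.exp_le_one_iff.2 (by nlinarith [le_max_right t 0])
    have h2 : M * Real.exp (-ν * max t 0) ≤ M := mul_le_of_le_one_right hM0 h1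
    exact mul_le_mul_of_nonneg_right h2 (norm_nonneg _)
  have hSc : ∀ x, Continuous fun t => S t x := fun x =>
    (hTcont x).comp_continuous (by fun_prop) (fun t => le_max_right t 0)
  have H : DESemigroup S M ν := by
    refine ⟨?_, ?_, ?_, ?_, hM0, hν⟩
    · rw [continuous_iff_continuousAt]
      rintro ⟨t, x⟩
      rw [ContinuousAt, tendsto_iff_norm_sub_tendsto_zero]
      have hlim : Filter.Tendsto (fun p : ℝ × E => M * ‖p.2 - x‖ + ‖S p.1 x - S t x‖)
          (nhds (t, x)) (nhds 0) := by
        have hc : Continuous fun p : ℝ × E => M * ‖p.2 - x‖ + ‖S p.1 x - S t x‖ :=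
          (continuous_const.mul (continuous_snd.sub continuous_const).norm).add
            (((hSc x).comp continuous_fst).sub continuous_const).norm
        have := hc.tendsto (t, x)
        simpa using this
      refine squeeze_zero (fun _ => norm_nonneg _) (fun p => ?_) hlim
      have h1 : S p.1 p.2 - S t x = S p.1 (p.2 - x) + (S p.1 x - S t x) := by
        rw [map_sub]; abel
      rw [h1]
      refine (norm_add_le _ _).trans ?_
      linarith [hSM p.1 (p.2 - x)]
    · intro t ht x
      rw [hS t ht]
      exact hTb t ht x
    · intro t s ht hs x
      rw [hS t ht, hS s hs, hS _ (add_nonneg ht hs), hTsemi t s ht hs]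
      rfl
    · intro x
      rw [hS 0 le_rfl, hT0]
      rfl
  obtain ⟨u, hu1, hu2, hu3, hu4⟩ := de_main H hω τ hKclosed hKadd hKsmul N hN hKnormal
    (fun t ht => by rw [hS t ht]; exact hTpos t ht)
    (fun t ht => by rw [hS t ht.le]; exact hTcompact t ht) F hFcont hFmaps hFper C₁ C₂ hC₁ hC₂ hC
    h₀ hh₀cont hh₀per hh₀pos hH1
  refine ⟨u, hu1, hu2, hu3, fun s t hst => ?_⟩
  rw [hu4 s t hst, hS _ (sub_nonneg.2 hst)]
  congr 1
  refine intervalIntegral.integral_congr fun r hr => ?_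
  rw [Set.uIcc_of_le hst] at hr
  rw [hS _ (sub_nonneg.2 hr.2)]
end

section
/- Let E be a real ordered Banach space with closed positive cone K, and let T(t) (t ≥ 0) be a positive compact C₀-semigroup on E with ‖T(t)‖ ≤ M e^{−ν t} for all t ≥ 0 (M ≥ 1, ν > 0). Let ω, τ > 0 and let F : ℝ × K × K → K be continuous, ω-periodic in its first argument, and mapping bounded sets into bounded sets. Then the operator Q defined on K_C by (Qu)(t) = (I − T(ω))⁻¹ ∫_{t−ω}^t T(t − s) F(s, u(s), u(s − τ)) ds maps K_C into K_C, is continuous, and maps every bounded subset of K_C onto a relatively compact subset of C_ω(ℝ, E); in particular Q : K_C → K_C is a compact operator. -/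
open BoundedContinuousFunction

theorem aux_totallyBounded_of_approx {E : Type*} [PseudoMetricSpace E] (A : Set E)
    (h : ∀ ε > 0, ∃ C : Set E, TotallyBounded C ∧ ∀ x ∈ A, ∃ y ∈ C, dist x y < ε) :
    TotallyBounded A := by
  rw [Metric.totallyBounded_iff]
  intro ε hε
  obtain ⟨C, hC, hA⟩ := h (ε / 2) (by positivity)
  obtain ⟨t, ht, hCt⟩ := Metric.totallyBounded_iff.1 hC (ε / 2) (by positivity)
  refine ⟨t, ht, fun x hx => ?_⟩
  obtain ⟨y, hy, hxy⟩ := hA x hx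
  obtain ⟨z, hz, hyz⟩ := Set.mem_iUnion₂.1 (hCt hy)
  refine Set.mem_iUnion₂.2 ⟨z, hz, ?_⟩
  rw [Metric.mem_ball] at *
  linarith [dist_triangle x y z]

section aux
variable {E : Type*} [NormedAddCommGroup E] [NormedSpace ℝ E] [CompleteSpace E]

theorem aux_cont (U : ℝ → E →L[ℝ] E) (hU : Continuous (fun p : ℝ × E => U p.1 p.2))
    (g : ℝ → E) (hg : Continuous g) (t : ℝ) : Continuous (fun s => U (t - s) (g s)) :=
  hU.comp ((continuous_const.sub continuous_id).prodMk hg)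

theorem aux_int (U : ℝ → E →L[ℝ] E) (M : ℝ) (hM : 0 ≤ M) (hUM : ∀ t, ‖U t‖ ≤ M)
    (g : ℝ → E) (R : ℝ) (hgR : ∀ s, ‖g s‖ ≤ R) (t a b : ℝ) :
    ‖∫ s in a..b, U (t - s) (g s)‖ ≤ M * R * |b - a| := by
  refine intervalIntegral.norm_integral_le_of_norm_le_const fun s _ => ?_
  exact ((U (t - s)).le_opNorm _).trans
    (mul_le_mul (hUM _) (hgR s) (norm_nonneg _) hM)

theorem aux_shift (U : ℝ → E →L[ℝ] E) (hU : Continuous (fun p : ℝ × E => U p.1 p.2))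
    (hsemi : ∀ a b, 0 ≤ a → 0 ≤ b → ∀ x, U (a + b) x = U a (U b x))
    (g : ℝ → E) (hg : Continuous g) (t h a b : ℝ) (hh : 0 ≤ h) (hab : a ≤ b) (hb : b ≤ t) :
    ∫ s in a..b, U (t + h - s) (g s) = U h (∫ s in a..b, U (t - s) (g s)) := by
  rw [← ContinuousLinearMap.intervalIntegral_comp_comm _
    ((aux_cont U hU g hg t).intervalIntegrable _ _)]
  refine intervalIntegral.integral_congr fun s hs => ?_
  rw [Set.uIcc_of_le hab] at hs
  have := hsemi h (t - s) hh (by linarith [hs.2]) (g s)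
  rw [← this]
  congr 2
  ring

theorem aux_compact (U : ℝ → E →L[ℝ] E) (hU : Continuous (fun p : ℝ × E => U p.1 p.2))
    (M : ℝ) (hM : 0 ≤ M) (hUM : ∀ t, ‖U t‖ ≤ M)
    (hsemi : ∀ a b, 0 ≤ a → 0 ≤ b → ∀ x, U (a + b) x = U a (U b x))
    (hc : ∀ t, 0 < t → IsCompactOperator (U t)) (ω : ℝ) (hω : 0 < ω) (R : ℝ) (hR : 0 ≤ R) :
    ∃ C : Set E, IsCompact C ∧ ∀ g : ℝ → E, Continuous g → (∀ s, ‖g s‖ ≤ R) →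
      ∀ t, ∫ s in (t - ω)..t, U (t - s) (g s) ∈ C := by
  let A : Set E := {x | ∃ g : ℝ → E, Continuous g ∧ (∀ s, ‖g s‖ ≤ R) ∧
      ∃ t, ∫ s in (t - ω)..t, U (t - s) (g s) = x}
  have hA : TotallyBounded A := by
    apply aux_totallyBounded_of_approx
    intro ε hε
    obtain ⟨δ, hδ, hδω, hδε⟩ : ∃ δ : ℝ, 0 < δ ∧ δ ≤ ω ∧ M * R * δ < ε := by
      refine ⟨min ω (ε / (2 * (M * R + 1))), lt_min hω (by positivity), min_le_left _ _, ?_⟩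
      calc M * R * min ω (ε / (2 * (M * R + 1))) ≤ (M * R + 1) * (ε / (2 * (M * R + 1))) := by
            gcongr
            · linarith
            · exact min_le_right _ _
        _ = ε / 2 := by field_simp
        _ < ε := by linarith
    refine ⟨closure (U δ '' Metric.closedBall 0 (M * R * ω)),
      ((hc δ hδ).isCompact_closure_image_closedBall _).totallyBounded, ?_⟩
    rintro x ⟨g, hg, hgR, t, rfl⟩
    refine ⟨U δ (∫ s in (t - ω)..(t - δ), U (t - δ - s) (g s)),
      subset_closure ⟨_, ?_, rfl⟩, ?_⟩
    · rw [mem_closedBall_zero_iff]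
      refine (aux_int U M hM hUM g R hgR _ _ _).trans ?_
      gcongr
      rw [abs_of_nonneg (by linarith)]
      linarith
    · rw [← aux_shift U hU hsemi g hg (t - δ) δ (t - ω) (t - δ) hδ.le (by linarith) le_rfl,
        dist_eq_norm]
      have hi := fun a b => (aux_cont U hU g hg t).intervalIntegrable (μ := MeasureTheory.volume) a b
      rw [sub_add_cancel, intervalIntegral.integral_interval_sub_left (hi _ _) (hi _ _)]
      refine (aux_int U M hM hUM g R hgR _ _ _).trans_lt ?_
      rw [abs_of_nonneg (by linarith)]
      simpa using hδε
  exact ⟨closure A, hA.closure.isCompact_of_isClosed isClosed_closure,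
    fun g hg hgR t => subset_closure ⟨g, hg, hgR, t, rfl⟩⟩

theorem aux_equi (U : ℝ → E →L[ℝ] E) (hU : Continuous (fun p : ℝ × E => U p.1 p.2))
    (hU0 : ∀ x, U 0 x = x)
    (M : ℝ) (hM : 0 ≤ M) (hUM : ∀ t, ‖U t‖ ≤ M)
    (hsemi : ∀ a b, 0 ≤ a → 0 ≤ b → ∀ x, U (a + b) x = U a (U b x))
    (hc : ∀ t, 0 < t → IsCompactOperator (U t)) (ω : ℝ) (hω : 0 < ω) (R : ℝ) (hR : 0 ≤ R)
    (ε : ℝ) (hε : 0 < ε) :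
    ∃ δ > 0, ∀ g : ℝ → E, Continuous g → (∀ s, ‖g s‖ ≤ R) →
      ∀ t h, 0 ≤ h → h < δ → ‖(∫ s in (t + h - ω)..(t + h), U (t + h - s) (g s)) -
        ∫ s in (t - ω)..t, U (t - s) (g s)‖ < ε := by
  obtain ⟨C, hC, hCg⟩ := aux_compact U hU M hM hUM hsemi hc ω hω R hR
  obtain ⟨v, hv, hv'⟩ := IsCompact.mem_uniformity_of_prod (f := fun h x => U h x)
    (s := Set.univ) (q := 0) hC hU.continuousOn (Set.mem_univ _)
    (Metric.dist_mem_uniformity (half_pos hε))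
  rw [nhdsWithin_univ] at hv
  obtain ⟨δ, hδ, hδv⟩ := Metric.mem_nhds_iff.1 hv
  let L := M * (M * R) + M * R + 1
  have hL : 0 < L := by positivity
  refine ⟨min δ (min ω (ε / (2 * L))), by positivity, ?_⟩
  intro g hg hgR t h hh hhδ
  have h1 : h < δ := hhδ.trans_le (min_le_left _ _)
  have h2 : h < ω := hhδ.trans_le ((min_le_right _ _).trans (min_le_left _ _))
  have h3 : h < ε / (2 * L) := hhδ.trans_le ((min_le_right _ _).trans (min_le_right _ _))
  have hi := fun t a b => (aux_cont U hU g hg t).intervalIntegrable (μ := MeasureTheory.volume) a b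
  set P := ∫ s in (t - ω)..t, U (t - s) (g s) with hP
  have e1 : (∫ s in (t + h - ω)..(t + h), U (t + h - s) (g s)) - P =
      (U h P - P) - U h (∫ s in (t - ω)..(t + h - ω), U (t - s) (g s))
        + ∫ s in t..(t + h), U (t + h - s) (g s) := by
    rw [← intervalIntegral.integral_add_adjacent_intervals (hi _ _ t) (hi _ _ _),
      aux_shift U hU hsemi g hg t h _ _ hh (by linarith) le_rfl,
      hP, ← intervalIntegral.integral_add_adjacent_intervals (hi t (t - ω) (t + h - ω)) (hi _ _ t),
      map_add]
    abel
  have e2 : ‖U h P - P‖ < ε / 2 := by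
    have := hv' h (hδv (by simpa [abs_of_nonneg hh] using h1)) P (hCg g hg hgR t)
    simpa [hU0, dist_eq_norm] using this
  have e3 : ‖U h (∫ s in (t - ω)..(t + h - ω), U (t - s) (g s))‖ ≤ M * (M * R * h) := by
    refine ((U h).le_opNorm _).trans (mul_le_mul (hUM h) ?_ (norm_nonneg _) hM)
    refine (aux_int U M hM hUM g R hgR _ _ _).trans (le_of_eq ?_)
    rw [abs_of_nonneg (by linarith)]; ring
  have e4 : ‖∫ s in t..(t + h), U (t + h - s) (g s)‖ ≤ M * R * h := by
    refine (aux_int U M hM hUM g R hgR _ _ _).trans (le_of_eq ?_)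
    rw [abs_of_nonneg (by linarith)]; ring
  have e5 : L * h < ε / 2 := by
    rw [lt_div_iff₀ (by positivity)] at h3
    linarith
  rw [e1]
  refine (norm_add_le _ _).trans_lt ((add_le_add (norm_sub_le _ _) le_rfl).trans_lt ?_)
  have : L * h = M * (M * R * h) + M * R * h + h := by simp only [L]; ring
  linarith

theorem aux_Spos (K : Set E) (hKclosed : IsClosed K)
    (hKadd : ∀ x ∈ K, ∀ y ∈ K, x + y ∈ K) (h0 : (0 : E) ∈ K)
    (T : ℝ → E →L[ℝ] E) (M ν : ℝ) (hν : 0 < ν)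
    (hT0 : T 0 = ContinuousLinearMap.id ℝ E)
    (hTsemi : ∀ t s : ℝ, 0 ≤ t → 0 ≤ s → T (t + s) = (T t).comp (T s))
    (hTnorm : ∀ t : ℝ, 0 ≤ t → ‖T t‖ ≤ M * Real.exp (-ν * t))
    (hTpos : ∀ t : ℝ, 0 ≤ t → Set.MapsTo (T t) K K) (ω : ℝ) (hω : 0 < ω)
    (S : E →L[ℝ] E)
    (hS₁ : (ContinuousLinearMap.id ℝ E - T ω).comp S = ContinuousLinearMap.id ℝ E) :
    Set.MapsTo S K K := by
  intro x hx
  have hSx : S x = x + T ω (S x) := by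
    have := DFunLike.congr_fun hS₁ x
    simp at this
    nth_rw 2 [← this]
    abel
  have hsum : ∀ n : ℕ, S x - T (n * ω) (S x) ∈ K := by
    intro n
    induction n with
    | zero => simpa [hT0] using h0
    | succ n ih =>
      have : S x - T ((n + 1 : ℕ) * ω) (S x) = (S x - T (n * ω) (S x)) + T (n * ω) x := by
        have e : ((n + 1 : ℕ) : ℝ) * ω = n * ω + ω := by push_cast; ring
        rw [e, hTsemi _ _ (by positivity) hω.le]
        have : T (n * ω) (S x) = T (n * ω) x + T (n * ω) (T ω (S x)) := by
          rw [← map_add, ← hSx]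
        simp only [ContinuousLinearMap.comp_apply]
        rw [this]
        abel
      rw [this]
      exact hKadd _ ih _ (hTpos _ (by positivity) hx)
  have hlim : Filter.Tendsto (fun n : ℕ => S x - T (n * ω) (S x)) Filter.atTop (nhds (S x)) := by
    have : Filter.Tendsto (fun n : ℕ => T (n * ω) (S x)) Filter.atTop (nhds 0) := by
      refine squeeze_zero_norm (a := fun n : ℕ => M * Real.exp (-ν * (n * ω)) * ‖S x‖) (fun n => ?_) ?_
      · exact ((T (n * ω)).le_opNorm _).trans
          (mul_le_mul_of_nonneg_right (hTnorm _ (by positivity)) (norm_nonneg _))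
      · have h1 : Filter.Tendsto (fun n : ℕ => -ν * (n * ω)) Filter.atTop Filter.atBot := by
          have : Filter.Tendsto (fun n : ℕ => (n : ℝ) * ω) Filter.atTop Filter.atTop :=
            tendsto_natCast_atTop_atTop.atTop_mul_const hω
          exact this.const_mul_atTop_of_neg (by linarith)
        have := ((Real.tendsto_exp_atBot.comp h1).const_mul M).mul_const ‖S x‖
        simpa using this
    simpa using tendsto_const_nhds.sub this
  exact hKclosed.mem_of_tendsto hlim (Filter.Eventually.of_forall hsum)

theorem aux_intpos (K : Set E) (hKclosed : IsClosed K)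
    (hKadd : ∀ x ∈ K, ∀ y ∈ K, x + y ∈ K)
    (hKsmul : ∀ c : ℝ, 0 ≤ c → ∀ x ∈ K, c • x ∈ K)
    (f : ℝ → E) (hf : Continuous f) (a b : ℝ) (hab : a < b)
    (hfK : ∀ s ∈ Set.Ioc a b, f s ∈ K) : ∫ s in a..b, f s ∈ K := by
  have hconv : Convex ℝ K := fun x hx y hy p q hp hq _ =>
    hKadd _ (hKsmul p hp x hx) _ (hKsmul q hq y hy)
  have h := hconv.set_average_mem (μ := MeasureTheory.volume) (t := Set.Ioc a b) (f := f) hKclosed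
    (by simp [hab]) (by simp)
    ((MeasureTheory.ae_restrict_iff' measurableSet_Ioc).2 (Filter.Eventually.of_forall hfK))
    (hf.integrableOn_Ioc)
  rw [intervalIntegral.integral_of_le hab.le]
  rw [MeasureTheory.setAverage_eq] at h
  have h' := hKsmul (b - a) (by linarith) _ h
  have hne : b - a ≠ 0 := by linarith
  simpa [MeasureTheory.measureReal_def, ENNReal.toReal_ofReal (by linarith : (0:ℝ) ≤ b - a), smul_smul, hne,
    hab.le] using h'

end aux

/-- Arzela-Ascoli for periodic functions. -/
theorem aux_arzela {E : Type*} [NormedAddCommGroup E] [NormedSpace ℝ E] [CompleteSpace E]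
    (ω : ℝ) (hω : 0 < ω) (A : Set (BoundedContinuousFunction ℝ E))
    (hper : ∀ f ∈ A, Function.Periodic f ω) (C : Set E) (hC : IsCompact C)
    (hAC : ∀ f ∈ A, ∀ t, f t ∈ C)
    (heq : ∀ ε > 0, ∃ δ > 0, ∀ f ∈ A, ∀ t h, 0 ≤ h → h < δ → ‖f (t + h) - f t‖ < ε) :
    IsCompact (closure A) := by
  let ρ : BoundedContinuousFunction ℝ E → BoundedContinuousFunction (Set.Icc 0 ω) E :=
    fun f => f.compContinuous ⟨Subtype.val, continuous_subtype_val⟩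
  have hiso : Isometry (fun f : A => ρ f) := by
    refine Isometry.of_dist_eq fun f g => le_antisymm ?_ ?_
    · refine (BoundedContinuousFunction.dist_le dist_nonneg).2 fun x => ?_
      exact BoundedContinuousFunction.dist_coe_le_dist (f := f.1) (g := g.1) x.1
    · change dist f.1 g.1 ≤ _
      refine (BoundedContinuousFunction.dist_le dist_nonneg).2 fun x => ?_
      obtain ⟨y, hy, hfy⟩ := (show Function.Periodic (fun x => (f.1 x, g.1 x)) ω from
        fun x => Prod.ext (hper _ f.2 x) (hper _ g.2 x)).exists_mem_Ico₀ hω x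
      have h1 : f.1 x = f.1 y := congrArg Prod.fst hfy
      have h2 : g.1 x = g.1 y := congrArg Prod.snd hfy
      rw [h1, h2]
      exact BoundedContinuousFunction.dist_coe_le_dist (f := ρ f.1) (g := ρ g.1)
        ⟨y, hy.1, hy.2.le⟩
  have hcomp : IsCompact (closure (ρ '' A)) := by
    refine BoundedContinuousFunction.arzela_ascoli C hC _ ?_ ?_
    · rintro _ x ⟨f, hf, rfl⟩
      exact hAC f hf _
    · intro x
      rw [Metric.equicontinuousAt_iff]
      intro ε hε
      obtain ⟨δ, hδ, h⟩ := heq ε hε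
      refine ⟨δ, hδ, ?_⟩
      rintro y hy ⟨_, f, hf, rfl⟩
      change dist (f x) (f y) < ε
      have hy' : |(y : ℝ) - x| < δ := hy
      rcases le_total (x : ℝ) y with hxy | hxy
      · have := h f hf x (y - x) (by linarith) (lt_of_abs_lt hy')
        rw [dist_comm, dist_eq_norm]
        simpa using this
      · have := h f hf y (x - y) (by linarith) (by linarith [neg_abs_le ((y : ℝ) - x)])
        rw [dist_eq_norm]
        simpa using this
  have htb : TotallyBounded ((fun f : A => ρ f) '' Set.univ) := by
    refine (hcomp.totallyBounded.subset subset_closure).subset ?_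
    rintro _ ⟨f, -, rfl⟩
    exact ⟨f, f.2, rfl⟩
  have h1 : TotallyBounded (Set.univ : Set A) :=
    (totallyBounded_image_iff hiso.isUniformInducing).1 htb
  have h2 : TotallyBounded A := by
    have := h1.image (f := (Subtype.val : A → _)) uniformContinuous_subtype_val
    simpa using this
  exact h2.closure.isCompact_of_isClosed isClosed_closure

/-- The operator
`(Qu)(t) = (I - T ω)⁻¹ ∫_{t-ω}^t T(t-s) F(s, u(s), u(s-τ)) ds`
maps `K_C` into `K_C`, is continuous on `K_C`, and maps bounded subsets of
`K_C` onto relatively compact subsets; in particular `Q : K_C → K_C` is a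
compact operator. Here `K_C` is the set of ω-periodic (bounded) continuous
functions with values in the positive cone `K`. -/
theorem stmt7
    {E : Type*} [NormedAddCommGroup E] [NormedSpace ℝ E] [CompleteSpace E]
    -- the positive cone `K`:
    (K : Set E) (hKclosed : IsClosed K)
    (hKadd : ∀ x ∈ K, ∀ y ∈ K, x + y ∈ K)
    (hKsmul : ∀ c : ℝ, 0 ≤ c → ∀ x ∈ K, c • x ∈ K)
    (hKpointed : ∀ x : E, x ∈ K → -x ∈ K → x = 0)
    -- `T` is a positive compact C₀-semigroup with `‖T t‖ ≤ M e^{-ν t}`: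
    (T : ℝ → E →L[ℝ] E) (M ν : ℝ) (hM : 1 ≤ M) (hν : 0 < ν)
    (hT0 : T 0 = ContinuousLinearMap.id ℝ E)
    (hTsemi : ∀ t s : ℝ, 0 ≤ t → 0 ≤ s → T (t + s) = (T t).comp (T s))
    (hTcont : ∀ x : E, ContinuousOn (fun t : ℝ => T t x) (Set.Ici (0 : ℝ)))
    (hTnorm : ∀ t : ℝ, 0 ≤ t → ‖T t‖ ≤ M * Real.exp (-ν * t))
    (hTpos : ∀ t : ℝ, 0 ≤ t → Set.MapsTo (T t) K K)
    (hTcompact : ∀ t : ℝ, 0 < t → IsCompactOperator (T t))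
    (ω τ : ℝ) (hω : 0 < ω) (hτ : 0 < τ)
    -- `F : ℝ × K × K → K` continuous, ω-periodic in `t`, mapping bounded sets
    -- into bounded sets:
    (F : ℝ → E → E → E)
    (hFcont : ContinuousOn (fun p : ℝ × E × E => F p.1 p.2.1 p.2.2)
      (Set.univ ×ˢ K ×ˢ K))
    (hFmaps : ∀ t : ℝ, ∀ x ∈ K, ∀ y ∈ K, F t x y ∈ K)
    (hFper : ∀ t : ℝ, ∀ x ∈ K, ∀ y ∈ K, F (t + ω) x y = F t x y)
    (hFbdd : ∀ r : ℝ, ∃ R : ℝ, ∀ t : ℝ, ∀ x ∈ K, ∀ y ∈ K,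
      ‖x‖ ≤ r → ‖y‖ ≤ r → ‖F t x y‖ ≤ R)
    -- `S = (I - T ω)⁻¹`:
    (S : E →L[ℝ] E)
    (hS₁ : (ContinuousLinearMap.id ℝ E - T ω).comp S = ContinuousLinearMap.id ℝ E)
    (hS₂ : S.comp (ContinuousLinearMap.id ℝ E - T ω) = ContinuousLinearMap.id ℝ E)
    -- the set `K_C` :
    (KC : Set (BoundedContinuousFunction ℝ E))
    (hKC : KC = {u : BoundedContinuousFunction ℝ E |
      Function.Periodic u ω ∧ ∀ t : ℝ, u t ∈ K})
    -- the operator `Q` :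
    (Q : BoundedContinuousFunction ℝ E → BoundedContinuousFunction ℝ E)
    (hQ : ∀ u ∈ KC, ∀ t : ℝ,
      Q u t = S (∫ s in (t - ω)..t, T (t - s) (F s (u s) (u (s - τ))))) :
    Set.MapsTo Q KC KC ∧
    ContinuousOn Q KC ∧
    ∀ B ⊆ KC, Bornology.IsBounded B → IsCompact (closure (Q '' B)) := by
  have hM0 : 0 ≤ M := by linarith
  let U : ℝ → E →L[ℝ] E := fun t => T (max t 0)
  have hUT : ∀ t, 0 ≤ t → U t = T t := fun t ht => by simp only [U, max_eq_left ht]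
  have hUM : ∀ t, ‖U t‖ ≤ M := by
    intro t
    refine (hTnorm _ (le_max_right _ _)).trans ?_
    have : Real.exp (-ν * max t 0) ≤ 1 := by
      rw [Real.exp_le_one_iff]
      nlinarith [le_max_right t 0]
    nlinarith
  have hU : Continuous (fun p : ℝ × E => U p.1 p.2) := by
    have : Continuous (fun p : E × ℝ => U p.2 p.1) := by
      refine continuous_prod_of_continuous_lipschitzWith _ ⟨M, hM0⟩ ?_ ?_
      · intro x
        exact (hTcont x).comp_continuous (continuous_id.max continuous_const)
          (fun t => Set.mem_Ici.2 (le_max_right _ _))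
      · intro t
        exact (U t).lipschitz.weaken (hUM t)
    exact this.comp continuous_swap
  have hU0 : ∀ x, U 0 x = x := fun x => by simp [U, hT0]
  have hsemi : ∀ a b, 0 ≤ a → 0 ≤ b → ∀ x, U (a + b) x = U a (U b x) := by
    intro a b ha hb x
    rw [hUT _ ha, hUT _ hb, hUT _ (add_nonneg ha hb), hTsemi a b ha hb]
    rfl
  have hc : ∀ t, 0 < t → IsCompactOperator (U t) := fun t ht => by
    rw [hUT t ht.le]; exact hTcompact t ht
  let G : BoundedContinuousFunction ℝ E → ℝ → E := fun u s => F s (u s) (u (s - τ))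
  have hKCp : ∀ u ∈ KC, Function.Periodic u ω := fun u hu => by rw [hKC] at hu; exact hu.1
  have hKCK : ∀ u ∈ KC, ∀ t, u t ∈ K := fun u hu => by rw [hKC] at hu; exact hu.2
  have hGG : ContinuousOn (fun p : BoundedContinuousFunction ℝ E × ℝ => G p.1 p.2)
      (KC ×ˢ Set.univ) := by
    refine hFcont.comp (f := fun p : BoundedContinuousFunction ℝ E × ℝ =>
      (p.2, p.1 p.2, p.1 (p.2 - τ))) ?_ ?_
    · apply Continuous.continuousOn
      refine continuous_snd.prodMk (Continuous.prodMk ?_ ?_)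
      · exact ContinuousEval.continuous_eval
      · exact ContinuousEval.continuous_eval.comp
          (continuous_fst.prodMk (continuous_snd.sub continuous_const))
    · rintro ⟨u, s⟩ ⟨hu, -⟩
      exact ⟨Set.mem_univ _, hKCK u hu _, hKCK u hu _⟩
  have hGc : ∀ u ∈ KC, Continuous (G u) := by
    intro u hu
    exact hGG.comp_continuous (f := fun s : ℝ => (u, s)) (by fun_prop) (fun s => ⟨hu, Set.mem_univ _⟩)
  have hGK : ∀ u ∈ KC, ∀ s, G u s ∈ K := fun u hu s => hFmaps _ _ (hKCK u hu _) _ (hKCK u hu _)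
  have hGp : ∀ u ∈ KC, Function.Periodic (G u) ω := by
    intro u hu s
    have h1 : s + ω - τ = s - τ + ω := by ring
    simp only [G, h1, hKCp u hu _]
    exact hFper _ _ (hKCK u hu _) _ (hKCK u hu _)
  have hQ' : ∀ u ∈ KC, ∀ t, Q u t = S (∫ s in (t - ω)..t, U (t - s) (G u s)) := by
    intro u hu t
    rw [hQ u hu t]
    congr 1
    refine intervalIntegral.integral_congr fun s hs => ?_
    rw [Set.uIcc_of_le (by linarith)] at hs
    have : U (t - s) = T (t - s) := hUT _ (by linarith [hs.2])
    simp only [this, G]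
  have hmaps : Set.MapsTo Q KC KC := by
    intro u hu
    rw [hKC]
    have h0 : (0 : E) ∈ K := by
      simpa using hKsmul 0 le_rfl _ (hKCK u hu 0)
    refine ⟨fun t => ?_, fun t => ?_⟩
    · rw [hQ' u hu, hQ' u hu]
      congr 1
      have := intervalIntegral.integral_comp_add_right (a := t - ω) (b := t)
        (fun s => U (t + ω - s) (G u s)) ω
      rw [sub_add_cancel] at this
      rw [add_sub_cancel_right, ← this]
      refine intervalIntegral.integral_congr fun s _ => ?_
      have h1 : t + ω - (s + ω) = t - s := by ring
      simp only [h1, hGp u hu s]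
    · rw [hQ' u hu]
      refine aux_Spos K hKclosed hKadd h0 T M ν hν hT0 hTsemi hTnorm hTpos ω hω S hS₁ ?_
      refine aux_intpos K hKclosed hKadd hKsmul _ (aux_cont U hU _ (hGc u hu) t) _ _ (by linarith) ?_
      intro s _
      exact hTpos _ (le_max_right _ _) (hGK u hu s)
  refine ⟨hmaps, ?_, ?_⟩
  · intro u hu
    rw [ContinuousWithinAt, Metric.tendsto_nhds]
    intro ε hε
    let L := ‖S‖ * (M * ω) + 1
    have hL : 0 < L := by positivity
    obtain ⟨v, hv, hv'⟩ := IsCompact.mem_uniformity_of_prod (f := G) (s := KC)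
      (k := Set.Icc 0 ω) isCompact_Icc (hGG.mono (Set.prod_mono le_rfl (Set.subset_univ _))) hu
      (Metric.dist_mem_uniformity (ε := ε / (2 * L)) (by positivity))
    filter_upwards [hv, self_mem_nhdsWithin] with w hw hwK
    have hd : ∀ s, ‖G w s - G u s‖ ≤ ε / (2 * L) := by
      intro s
      obtain ⟨y, hy, hfy⟩ := (show Function.Periodic (fun s => (G w s, G u s)) ω from
        fun s => Prod.ext (hGp w hwK s) (hGp u hu s)).exists_mem_Ico₀ hω s
      have h1 : G w s = G w y := congrArg Prod.fst hfy
      have h2 : G u s = G u y := congrArg Prod.snd hfy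
      rw [h1, h2, ← dist_eq_norm]
      exact (hv' w hw y ⟨hy.1, hy.2.le⟩).le
    refine lt_of_le_of_lt ((BoundedContinuousFunction.dist_le (C := ε / 2) (by positivity)).2
      fun t => ?_) (by linarith)
    rw [hQ' u hu, hQ' w hwK, dist_eq_norm, ← map_sub, ← intervalIntegral.integral_sub
      ((aux_cont U hU _ (hGc w hwK) t).intervalIntegrable _ _)
      ((aux_cont U hU _ (hGc u hu) t).intervalIntegrable _ _)]
    simp only [← map_sub]
    have h3 := aux_int U M hM0 hUM (fun s => G w s - G u s) _ hd t (t - ω) t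
    rw [show t - (t - ω) = ω by ring, abs_of_pos hω] at h3
    calc _ ≤ ‖S‖ * (M * (ε / (2 * L)) * ω) :=
          (S.le_opNorm _).trans (mul_le_mul_of_nonneg_left h3 (norm_nonneg _))
      _ = (‖S‖ * (M * ω)) * (ε / (2 * L)) := by ring
      _ ≤ L * (ε / (2 * L)) := by
          gcongr
          simp only [L]; linarith
      _ = ε / 2 := by field_simp
  · intro B hB hBb
    obtain ⟨r, hr⟩ := hBb.exists_norm_le
    obtain ⟨R₀, hR₀⟩ := hFbdd r
    let R := max R₀ 0
    have hGR : ∀ u ∈ B, ∀ s, ‖G u s‖ ≤ R := fun u hu s =>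
      (hR₀ s _ (hKCK u (hB hu) _) _ (hKCK u (hB hu) _) ((u.norm_coe_le_norm _).trans (hr u hu))
        ((u.norm_coe_le_norm _).trans (hr u hu))).trans (le_max_left _ _)
    have hR : 0 ≤ R := le_max_right _ _
    obtain ⟨C, hC, hCg⟩ := aux_compact U hU M hM0 hUM hsemi hc ω hω R hR
    refine aux_arzela ω hω _ ?_ (S '' C) (hC.image S.continuous) ?_ ?_
    · rintro _ ⟨u, hu, rfl⟩
      exact hKCp _ (hmaps (hB hu))
    · rintro _ ⟨u, hu, rfl⟩ t
      rw [hQ' u (hB hu)]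
      exact ⟨_, hCg _ (hGc u (hB hu)) (hGR u hu) t, rfl⟩
    · intro ε hε
      obtain ⟨δ, hδ, h⟩ := aux_equi U hU hU0 M hM0 hUM hsemi hc ω hω R hR
        (ε / (‖S‖ + 1)) (by positivity)
      refine ⟨δ, hδ, ?_⟩
      rintro _ ⟨u, hu, rfl⟩ t k hk hkδ
      rw [hQ' u (hB hu), hQ' u (hB hu), ← map_sub]
      have h1 := h _ (hGc u (hB hu)) (hGR u hu) t k hk hkδ
      rw [lt_div_iff₀ (by positivity)] at h1
      refine (S.le_opNorm _).trans_lt (lt_of_le_of_lt ?_ h1)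
      rw [mul_comm]
      gcongr
      linarith
end

section
/- Let E be a real ordered Banach space whose positive cone K is closed and normal with normal constant N, let T(t) (t ≥ 0) be a positive compact C₀-semigroup on E with ‖T(t)‖ ≤ M e^{−ν t} for all t ≥ 0 (M ≥ 1, ν > 0), let ω, τ > 0, and let F : ℝ × K × K → K be continuous with F(t + ω, x, y) = F(t, x, y). Assume (H1): there exist constants C₁, C₂ > 0 with C₁ + C₂ < ν and a continuous ω-periodic function h₀ : ℝ → K such that F(t, x, y) ≤ C₁ x + C₂ y + h₀(t) for all t ∈ ℝ and x, y ∈ K. Then the set Λ(Q) = {u ∈ K_C : u = η Q u for some η ∈ (0, 1)} is bounded in the sup norm, where (Qu)(t) = (I − T(ω))⁻¹ ∫_{t−ω}^t T(t − s) F(s, u(s), u(s − τ)) ds. -/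
open MeasureTheory Filter Topology

/-- joint continuity of the extended semigroup -/
lemma aux_joint {E : Type*} [NormedAddCommGroup E] [NormedSpace ℝ E]
    (T : ℝ → E →L[ℝ] E) (M : ℝ)
    (hTcont : ∀ x : E, ContinuousOn (fun t : ℝ => T t x) (Set.Ici (0 : ℝ)))
    (hTM : ∀ t : ℝ, 0 ≤ t → ‖T t‖ ≤ M) :
    Continuous (fun p : ℝ × E => T (max p.1 0) p.2) := by
  have h1 : ∀ x : E, Continuous (fun t : ℝ => T (max t 0) x) := by
    intro x
    exact (hTcont x).comp_continuous (f := fun t : ℝ => max t 0) (by fun_prop)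
      (fun t => le_max_right t 0)
  have hM0 : 0 ≤ M := (norm_nonneg _).trans (hTM 0 le_rfl)
  rw [continuous_iff_continuousAt]
  rintro ⟨a, x⟩
  unfold ContinuousAt
  rw [tendsto_iff_norm_sub_tendsto_zero]
  have hlim : Tendsto (fun p : ℝ × E => M * ‖p.2 - x‖ + ‖T (max p.1 0) x - T (max a 0) x‖)
      (𝓝 (a, x)) (𝓝 0) := by
    have hc : Continuous (fun p : ℝ × E =>
        M * ‖p.2 - x‖ + ‖T (max p.1 0) x - T (max a 0) x‖) := by
      have := (h1 x).comp (continuous_fst (X := ℝ) (Y := E))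
      exact (continuous_const.mul (continuous_snd.sub continuous_const).norm).add
        (this.sub continuous_const).norm
    have := hc.tendsto (a, x)
    simpa using this
  refine squeeze_zero (fun _ => norm_nonneg _) ?_ hlim
  rintro ⟨b, y⟩
  have : T (max b 0) y - T (max a 0) x
      = T (max b 0) (y - x) + (T (max b 0) x - T (max a 0) x) := by
    rw [map_sub]; abel
  simp only [this]
  refine (norm_add_le _ _).trans ?_
  gcongr
  exact ContinuousLinearMap.le_of_opNorm_le _ (hTM _ (le_max_right _ _)) _

lemma aux_int_mem {E : Type*} [NormedAddCommGroup E] [NormedSpace ℝ E] [CompleteSpace E]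
    (K : Set E) (hKclosed : IsClosed K)
    (hKadd : ∀ x ∈ K, ∀ y ∈ K, x + y ∈ K)
    (hKsmul : ∀ c : ℝ, 0 ≤ c → ∀ x ∈ K, c • x ∈ K)
    (ω : ℝ) (hω : 0 < ω) (g : ℝ → E) (hg : Continuous g) (hgK : ∀ t, g t ∈ K) :
    (∫ r in (0 : ℝ)..ω, g r) ∈ K := by
  have hconv : Convex ℝ K := by
    intro x hx y hy a b ha hb _
    exact hKadd _ (hKsmul a ha x hx) _ (hKsmul b hb y hy)
  rw [intervalIntegral.integral_of_le hω.le]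
  have hi : IntegrableOn g (Set.Ioc 0 ω) volume :=
    (hg.integrableOn_Icc (a := 0) (b := ω)).mono_set Set.Ioc_subset_Icc_self
  rw [← measure_smul_setAverage g (by simp : volume (Set.Ioc (0 : ℝ) ω) ≠ ⊤)]
  refine hKsmul _ ENNReal.toReal_nonneg _ ?_
  refine hconv.set_average_mem hKclosed (by simp [hω]) (by simp) ?_ hi
  exact Eventually.of_forall hgK

lemma aux_bdd {E : Type*} [NormedAddCommGroup E] (u : ℝ → E) (hu : Continuous u)
    (ω : ℝ) (hω : 0 < ω) (hper : ∀ t, u (t + ω) = u t) : ∃ B, 0 ≤ B ∧ ∀ t, ‖u t‖ ≤ B := by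
  obtain ⟨B, hB⟩ := (isCompact_Icc (a := (0 : ℝ)) (b := ω)).exists_bound_of_continuousOn
    hu.continuousOn
  refine ⟨B, (norm_nonneg _).trans (hB 0 ⟨le_rfl, hω.le⟩), fun t => ?_⟩
  have hp : Function.Periodic u ω := hper
  obtain ⟨y, hy, hty⟩ := hp.exists_mem_Ico₀ hω t
  rw [hty]
  exact hB y ⟨hy.1, hy.2.le⟩

/-- Under (H1) (with `C₁ + C₂ < ν`), the Leray–Schauder set
`Λ(Q) = {u ∈ K_C : u = η Q u for some η ∈ (0,1)}` is bounded in the sup norm,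
where `(Qu)(t) = (I - T ω)⁻¹ ∫_{t-ω}^t T(t-s) F(s, u(s), u(s-τ)) ds`. -/
theorem stmt8
    {E : Type*} [NormedAddCommGroup E] [NormedSpace ℝ E] [CompleteSpace E]
    -- the positive cone `K`:
    (K : Set E) (hKclosed : IsClosed K)
    (hKadd : ∀ x ∈ K, ∀ y ∈ K, x + y ∈ K)
    (hKsmul : ∀ c : ℝ, 0 ≤ c → ∀ x ∈ K, c • x ∈ K)
    (hKpointed : ∀ x : E, x ∈ K → -x ∈ K → x = 0)
    -- `K` is normal with normal constant `N`:
    (N : ℝ) (hN : 0 < N)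
    (hKnormal : ∀ x y : E, x ∈ K → y - x ∈ K → ‖x‖ ≤ N * ‖y‖)
    -- `T` is a positive compact C₀-semigroup with `‖T t‖ ≤ M e^{-ν t}`:
    (T : ℝ → E →L[ℝ] E) (M ν : ℝ) (hM : 1 ≤ M) (hν : 0 < ν)
    (hT0 : T 0 = ContinuousLinearMap.id ℝ E)
    (hTsemi : ∀ t s : ℝ, 0 ≤ t → 0 ≤ s → T (t + s) = (T t).comp (T s))
    (hTcont : ∀ x : E, ContinuousOn (fun t : ℝ => T t x) (Set.Ici (0 : ℝ)))
    (hTnorm : ∀ t : ℝ, 0 ≤ t → ‖T t‖ ≤ M * Real.exp (-ν * t))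
    (hTpos : ∀ t : ℝ, 0 ≤ t → Set.MapsTo (T t) K K)
    (hTcompact : ∀ t : ℝ, 0 < t → IsCompactOperator (T t))
    (ω τ : ℝ) (hω : 0 < ω) (hτ : 0 < τ)
    -- `F : ℝ × K × K → K` continuous and ω-periodic in `t`:
    (F : ℝ → E → E → E)
    (hFcont : ContinuousOn (fun p : ℝ × E × E => F p.1 p.2.1 p.2.2)
      (Set.univ ×ˢ K ×ˢ K))
    (hFmaps : ∀ t : ℝ, ∀ x ∈ K, ∀ y ∈ K, F t x y ∈ K)
    (hFper : ∀ t : ℝ, ∀ x ∈ K, ∀ y ∈ K, F (t + ω) x y = F t x y)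
    -- (H1):
    (C₁ C₂ : ℝ) (hC₁ : 0 < C₁) (hC₂ : 0 < C₂) (hC : C₁ + C₂ < ν)
    (h₀ : ℝ → E) (hh₀cont : Continuous h₀) (hh₀per : ∀ t : ℝ, h₀ (t + ω) = h₀ t)
    (hh₀pos : ∀ t : ℝ, h₀ t ∈ K)
    (hH1 : ∀ t : ℝ, ∀ x ∈ K, ∀ y ∈ K,
      C₁ • x + C₂ • y + h₀ t - F t x y ∈ K)
    -- `S = (I - T ω)⁻¹`:
    (S : E →L[ℝ] E)
    (hS₁ : (ContinuousLinearMap.id ℝ E - T ω).comp S = ContinuousLinearMap.id ℝ E)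
    (hS₂ : S.comp (ContinuousLinearMap.id ℝ E - T ω) = ContinuousLinearMap.id ℝ E) :
    -- the set `Λ(Q)` is bounded in the sup norm:
    ∃ R : ℝ, ∀ u : ℝ → E,
      Continuous u → (∀ t : ℝ, u (t + ω) = u t) → (∀ t : ℝ, u t ∈ K) →
      (∃ η : ℝ, 0 < η ∧ η < 1 ∧ ∀ t : ℝ,
        u t = η • S (∫ s in (t - ω)..t, T (t - s) (F s (u s) (u (s - τ))))) →
      ∀ t : ℝ, ‖u t‖ ≤ R := by
  have hTM : ∀ t : ℝ, 0 ≤ t → ‖T t‖ ≤ M := by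
    intro t ht
    refine (hTnorm t ht).trans ?_
    have : Real.exp (-ν * t) ≤ 1 := Real.exp_le_one_iff.2 (by nlinarith)
    nlinarith
  have hJ := aux_joint T M hTcont hTM
  set ρ : ℝ := Real.exp (-ν * ω) with hρ
  have hρ0 : 0 < ρ := Real.exp_pos _
  have hρ1 : ρ < 1 := by
    rw [hρ, Real.exp_lt_one_iff]; nlinarith
  have hSx : ∀ x, S x = x + T ω (S x) := by
    intro x
    have := DFunLike.congr_fun hS₁ x
    simp at this
    exact sub_eq_iff_eq_add.1 this
  -- adapted norm bound
  let A : ℝ → E → Prop := fun c x => ∀ r : ℝ, 0 ≤ r → ‖T r x‖ ≤ c * Real.exp (-ν * r)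
  have hA_norm : ∀ c x, A c x → ‖x‖ ≤ c := by
    intro c x h
    have := h 0 le_rfl
    simpa [hT0] using this
  have hA_of : ∀ c x, ‖x‖ ≤ c → A (M * c) x := by
    intro c x h r hr
    have := ContinuousLinearMap.le_of_opNorm_le _ (hTnorm r hr) x
    refine this.trans ?_
    have h2 : 0 ≤ M * Real.exp (-ν * r) := by positivity
    nlinarith [mul_le_mul_of_nonneg_left h h2]
  have hA_add : ∀ c d x y, A c x → A d y → A (c + d) (x + y) := by
    intro c d x y hx hy r hr
    rw [map_add, add_mul]
    exact (norm_add_le _ _).trans (add_le_add (hx r hr) (hy r hr))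
  have hA_smul : ∀ a c x, 0 ≤ a → A c x → A (a * c) (a • x) := by
    intro a c x ha hx r hr
    rw [map_smul, norm_smul, Real.norm_of_nonneg ha, mul_assoc]
    exact mul_le_mul_of_nonneg_left (hx r hr) ha
  have hA_T : ∀ c x a, 0 ≤ a → A c x → A (c * Real.exp (-ν * a)) (T a x) := by
    intro c x a ha hx r hr
    have h := hx (r + a) (by linarith)
    rw [hTsemi r a hr ha] at h
    have e : Real.exp (-ν * (r + a)) = Real.exp (-ν * a) * Real.exp (-ν * r) := by
      rw [← Real.exp_add]; ring_nf
    rw [e, ← mul_assoc] at h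
    exact h
  have hpow : ∀ c : ℝ, Tendsto (fun n : ℕ => ρ ^ n * c) atTop (𝓝 0) := by
    intro c
    simpa using (tendsto_pow_atTop_nhds_zero_of_lt_one hρ0.le hρ1).mul_const c
  have hA_S : ∀ L x, A ((1 - ρ) * L) x → A L (S x) := by
    intro L x hx
    have key : ∀ n : ℕ, A (L + ρ ^ n * (M * ‖S x‖ + |L|)) (S x) := by
      intro n
      induction n with
      | zero =>
        intro r hr
        refine (hA_of _ (S x) le_rfl r hr).trans ?_
        gcongr
        have := neg_abs_le L
        simp only [pow_zero]
        linarith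
      | succ n ih =>
        have h1 := hA_add _ _ _ _ hx (hA_T _ _ ω hω.le ih)
        rw [← hSx] at h1
        have e : (1 - ρ) * L + (L + ρ ^ n * (M * ‖S x‖ + |L|)) * Real.exp (-ν * ω)
          = L + ρ ^ (n + 1) * (M * ‖S x‖ + |L|) := by
          rw [← hρ]; ring
        rwa [e] at h1
    intro r hr
    have hl : Tendsto (fun n : ℕ => (L + ρ ^ n * (M * ‖S x‖ + |L|)) * Real.exp (-ν * r))
        atTop (𝓝 (L * Real.exp (-ν * r))) := by
      have := ((hpow (M * ‖S x‖ + |L|)).const_add L).mul_const (Real.exp (-ν * r))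
      simpa using this
    exact ge_of_tendsto' hl (fun n => key n r hr)
  -- positivity of S
  have hSpos : ∀ x ∈ K, S x ∈ K := by
    intro x hx
    have h0 : (0 : E) ∈ K := by simpa using hKsmul 0 le_rfl x hx
    have key : ∀ n : ℕ, ∃ z : E, ‖z‖ ≤ ρ ^ n * (M * ‖S x‖) ∧
        A (ρ ^ n * (M * ‖S x‖)) z ∧ S x - z ∈ K := by
      intro n
      induction n with
      | zero =>
        have h1 := hA_of _ (S x) le_rfl
        exact ⟨S x, by simpa using hA_norm _ _ h1, by simpa using h1, by simpa using h0⟩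
      | succ n ih =>
        obtain ⟨z, _, h2, h3⟩ := ih
        have h4 := hA_T _ _ ω hω.le h2
        have e : ρ ^ n * (M * ‖S x‖) * Real.exp (-ν * ω) = ρ ^ (n + 1) * (M * ‖S x‖) := by
          rw [← hρ]; ring
        rw [e] at h4
        refine ⟨T ω z, hA_norm _ _ h4, h4, ?_⟩
        have h5 := hKadd _ hx _ (hTpos ω hω.le h3)
        rw [map_sub, ← add_sub_assoc, ← hSx] at h5
        exact h5
    choose z hz1 _ hz3 using key
    have hz : Tendsto z atTop (𝓝 0) := squeeze_zero_norm hz1 (hpow _)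
    have hl : Tendsto (fun n => S x - z n) atTop (𝓝 (S x)) := by
      simpa using hz.const_sub (S x)
    exact hKclosed.mem_of_tendsto hl (Eventually.of_forall hz3)
  -- the solution operator
  let P : (ℝ → E) → ℝ → E := fun g t => S (∫ r in (0 : ℝ)..ω, T (max r 0) (g (t - r)))
  have hint : ∀ g : ℝ → E, Continuous g → ∀ t, Continuous (fun r : ℝ => T (max r 0) (g (t - r))) := by
    intro g hg t
    exact hJ.comp (continuous_id.prodMk (hg.comp (continuous_const.sub continuous_id)))
  have hPcont : ∀ g : ℝ → E, Continuous g → Continuous (P g) := by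
    intro g hg
    refine S.continuous.comp ?_
    refine intervalIntegral.continuous_parametric_intervalIntegral_of_continuous' ?_ 0 ω
    exact hJ.comp (continuous_snd.prodMk (hg.comp (continuous_fst.sub continuous_snd)))
  have hPpos : ∀ g : ℝ → E, Continuous g → (∀ t, g t ∈ K) → ∀ t, P g t ∈ K := by
    intro g hg hgK t
    refine hSpos _ (aux_int_mem K hKclosed hKadd hKsmul ω hω _ (hint g hg t) ?_)
    intro r
    exact hTpos _ (le_max_right _ _) (hgK _)
  have hPA : ∀ (g : ℝ → E) (G : ℝ), Continuous g → (∀ t, A G (g t)) →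
      ∀ t, A (G / ν) (P g t) := by
    intro g G hg hgA t
    refine hA_S _ _ ?_
    intro a ha
    rw [← ContinuousLinearMap.intervalIntegral_comp_comm _ ((hint g hg t).intervalIntegrable _ _)]
    have hder : ∀ r : ℝ, HasDerivAt
        (fun r : ℝ => -(G / ν) * Real.exp (-ν * a) * Real.exp (-ν * r))
        (G * Real.exp (-ν * a) * Real.exp (-ν * r)) r := by
      intro r
      have h := (((hasDerivAt_id r).const_mul (-ν)).exp).const_mul
        (-(G / ν) * Real.exp (-ν * a))
      refine HasDerivAt.congr_deriv h ?_
      simp only [id]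
      field_simp
    have hci : Continuous (fun r : ℝ => G * Real.exp (-ν * a) * Real.exp (-ν * r)) := by fun_prop
    have hb : ‖∫ r in (0 : ℝ)..ω, T a (T (max r 0) (g (t - r)))‖
        ≤ ∫ r in (0 : ℝ)..ω, G * Real.exp (-ν * a) * Real.exp (-ν * r) := by
      refine intervalIntegral.norm_integral_le_of_norm_le hω.le ?_ (hci.intervalIntegrable _ _)
      refine Eventually.of_forall ?_
      intro r hr
      have hr0 : 0 ≤ r := hr.1.le
      rw [max_eq_left hr0]
      have := hA_T _ _ r hr0 (hgA (t - r)) a ha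
      refine this.trans (le_of_eq (by ring))
    refine hb.trans (le_of_eq ?_)
    rw [intervalIntegral.integral_eq_sub_of_hasDerivAt (fun r _ => hder r)
      (hci.intervalIntegrable _ _)]
    simp only [mul_zero, Real.exp_zero]
    rw [← hρ]
    ring
  -- constants
  obtain ⟨B₀, hB₀, hB₀'⟩ := aux_bdd h₀ hh₀cont ω hω hh₀per
  set q : ℝ := (C₁ + C₂) / ν with hq
  have hq0 : 0 ≤ q := by positivity
  have hq1 : q < 1 := (div_lt_one hν).2 hC
  set H : ℝ := M * B₀ / ν / (1 - q) with hH
  have hH' : q * H + M * B₀ / ν = H := by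
    have : (1 - q) ≠ 0 := by linarith
    rw [hH]; field_simp; ring
  refine ⟨N * H, ?_⟩
  rintro u hu huper huK ⟨η, hη0, hη1, hueq⟩ t
  obtain ⟨D, hD, hD'⟩ := aux_bdd u hu ω hω huper
  have hH0 : 0 ≤ H := by
    have : 0 < 1 - q := by linarith
    positivity
  let f : ℝ → E := fun s => F s (u s) (u (s - τ))
  have hf : Continuous f := by
    have : Continuous (fun s : ℝ => ((s, u s, u (s - τ)) : ℝ × E × E)) := by fun_prop
    exact hFcont.comp_continuous this (fun s => ⟨trivial, huK _, huK _⟩)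
  have huP : ∀ t, u t = η • P f t := by
    intro t
    rw [hueq t]
    congr 2
    have h1 := intervalIntegral.integral_comp_sub_left (a := 0) (b := ω)
      (fun s => T (t - s) (f s)) t
    rw [sub_zero] at h1
    change (∫ s in (t - ω)..t, T (t - s) (f s)) = _
    rw [← h1]
    refine intervalIntegral.integral_congr ?_
    intro r hr
    rw [Set.uIcc_of_le hω.le] at hr
    simp only [sub_sub_cancel, max_eq_left hr.1]
  have key : ∀ n : ℕ, ∃ w : ℝ → E, Continuous w ∧ (∀ t, A (H + q ^ n * (M * D)) (w t)) ∧
      ∀ t, w t - u t ∈ K := by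
    intro n
    induction n with
    | zero =>
      refine ⟨u, hu, ?_, ?_⟩
      · intro t r hr
        refine (hA_of _ _ (hD' t) r hr).trans ?_
        gcongr
        simp only [pow_zero]
        linarith
      · intro t
        simpa using hKsmul 0 le_rfl _ (huK t)
    | succ n ih =>
      obtain ⟨w, hw, hwA, hwK⟩ := ih
      let g : ℝ → E := fun s => C₁ • w s + C₂ • w (s - τ) + h₀ s
      have hg : Continuous g := by fun_prop
      refine ⟨P g, hPcont g hg, ?_, ?_⟩
      · intro t
        have := hPA g (C₁ * (H + q ^ n * (M * D)) + C₂ * (H + q ^ n * (M * D)) + M * B₀) hg ?_ t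
        · convert this using 1
          have h2 : C₁ + C₂ = q * ν := by rw [hq]; field_simp
          rw [← add_mul, h2, add_div, mul_right_comm, mul_div_assoc, div_self hν.ne', mul_one]
          rw [pow_succ]
          linear_combination -hH'
        · intro s
          exact hA_add _ _ _ _ (hA_add _ _ _ _ (hA_smul _ _ _ hC₁.le (hwA s))
            (hA_smul _ _ _ hC₂.le (hwA _))) (hA_of _ _ (hB₀' s))
      · intro t
        have h1 : P g t - u t = P (fun s => g s - η • f s) t := by
          rw [huP t]
          have hi : IntervalIntegrable (fun r => η • T (max r 0) (f (t - r))) volume 0 ω :=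
            ((hint f hf t).const_smul η).intervalIntegrable _ _
          simp only [P]
          rw [← map_smul, ← map_sub, ← intervalIntegral.integral_smul,
            ← intervalIntegral.integral_sub ((hint g hg t).intervalIntegrable _ _) hi]
          simp only [map_sub, map_smul]
        rw [h1]
        refine hPpos _ (hg.sub (hf.const_smul η)) ?_ t
        intro s
        have e : g s - η • f s = (C₁ • (w s - u s) + C₂ • (w (s - τ) - u (s - τ)))
            + ((C₁ • u s + C₂ • u (s - τ) + h₀ s - F s (u s) (u (s - τ)))
              + (1 - η) • f s) := by
          simp only [g, f]
          module
        change g s - η • f s ∈ K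
        rw [e]
        exact hKadd _ (hKadd _ (hKsmul _ hC₁.le _ (hwK _)) _ (hKsmul _ hC₂.le _ (hwK _))) _
          (hKadd _ (hH1 s _ (huK _) _ (huK _)) _
            (hKsmul _ (by linarith) _ (hFmaps s _ (huK _) _ (huK _))))
  have hl : Tendsto (fun n : ℕ => N * (H + q ^ n * (M * D))) atTop (𝓝 (N * H)) := by
    have := (((tendsto_pow_atTop_nhds_zero_of_lt_one hq0 hq1).mul_const (M * D)).const_add
      H).const_mul N
    simpa using this
  refine ge_of_tendsto' hl ?_
  intro n
  obtain ⟨w, _, hwA, hwK⟩ := key n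
  exact (hKnormal _ _ (huK t) (hwK t)).trans
    (mul_le_mul_of_nonneg_left (hA_norm _ _ (hwA t)) hN.le)
end
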